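/- arXiv:1403.6911 — 6 statements merged into one kernel-verified Lean document; each statement's English description precedes it below -/
import Mathlib

section
/- Let p < p′ be prime numbers with p′ the smallest prime greater than p (i.e., p and p′ are consecutive primes). If (p′+1)² - (p+1)² > (p′)^{3/2} + p^{3/2}, then p′ - p > (5/7)·√p. -/
/-!
Write `x = p` and `y = p'`. The difference of squares factors as `(y - x) * (x + y + 2)`, while
`√x ≤ √y` bounds `y * √y + x * √x` below by `(x + y) * √x`. Dividing gives
`(x + y) / (x + y + 2) * √x < y - x`, and `t / (t + 2)` is increasing with value `5 / 7` at
`t = 5 = 2 + 3`. When `x ≤ 1` the gap `y - x ≥ 1` between distinct integers already suffices.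
-/

section

variable {x y : ℝ}

lemma lt_of_sqrt_cube_add_sqrt_cube_lt (hy : 0 ≤ y)
    (h : √y ^ 3 + √x ^ 3 < (y + 1) ^ 2 - (x + 1) ^ 2) : x < y := by
  have hcubes : 0 ≤ √y ^ 3 + √x ^ 3 := by positivity
  have hsq : (x + 1) ^ 2 < (y + 1) ^ 2 := sub_pos.mp (hcubes.trans_lt h)
  have hsucc : x + 1 < y + 1 := lt_of_pow_lt_pow_left₀ 2 (by positivity) hsq
  exact lt_of_add_lt_add_right hsucc

lemma add_mul_sqrt_le_sqrt_cube_add_sqrt_cube (hx : 0 ≤ x) (hxy : x ≤ y) :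
    (x + y) * √x ≤ √y ^ 3 + √x ^ 3 := by
  have hy : 0 ≤ y := hx.trans hxy
  calc (x + y) * √x = y * √x + x * √x := by ring
    _ ≤ y * √y + x * √x := by gcongr
    _ = √y ^ 3 + √x ^ 3 := by rw [pow_succ √y, pow_succ √x, Real.sq_sqrt hy, Real.sq_sqrt hx]

lemma add_div_add_add_two_mul_sqrt_lt_sub (hx : 0 ≤ x) (hy : 0 ≤ y)
    (h : √y ^ 3 + √x ^ 3 < (y + 1) ^ 2 - (x + 1) ^ 2) :
    (x + y) / (x + y + 2) * √x < y - x := by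
  have hxy : x < y := lt_of_sqrt_cube_add_sqrt_cube_lt hy h
  rw [div_mul_eq_mul_div, div_lt_iff₀ (by positivity)]
  calc (x + y) * √x ≤ √y ^ 3 + √x ^ 3 := add_mul_sqrt_le_sqrt_cube_add_sqrt_cube hx hxy.le
    _ < (y + 1) ^ 2 - (x + 1) ^ 2 := h
    _ = (y - x) * (x + y + 2) := by ring

lemma five_sevenths_mul_sqrt_lt_sub (hx : 0 ≤ x) (hy : 0 ≤ y) (hsum : 5 ≤ x + y)
    (h : √y ^ 3 + √x ^ 3 < (y + 1) ^ 2 - (x + 1) ^ 2) :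
    5 / 7 * √x < y - x := by
  have hratio : 5 / 7 ≤ (x + y) / (x + y + 2) := by
    rw [div_le_div_iff₀ (by norm_num) (by positivity)]
    linarith
  calc 5 / 7 * √x ≤ (x + y) / (x + y + 2) * √x := by gcongr
    _ < y - x := add_div_add_add_two_mul_sqrt_lt_sub hx hy h

end

theorem stmt4_general (m n : ℕ)
    (h : √(n : ℝ) ^ 3 + √(m : ℝ) ^ 3 < ((n : ℝ) + 1) ^ 2 - ((m : ℝ) + 1) ^ 2) :
    (5 / 7 : ℝ) * √(m : ℝ) < (n : ℝ) - (m : ℝ) := by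
  have hmn : m < n := by exact_mod_cast lt_of_sqrt_cube_add_sqrt_cube_lt n.cast_nonneg h
  rcases le_or_gt m 1 with hm | hm
  · have hsqrt : √(m : ℝ) ≤ 1 := Real.sqrt_le_one.mpr (by exact_mod_cast hm)
    have hgap : (m : ℝ) + 1 ≤ n := by exact_mod_cast hmn
    linarith
  · have hsum : (5 : ℝ) ≤ m + n := by exact_mod_cast (by omega : 5 ≤ m + n)
    exact five_sevenths_mul_sqrt_lt_sub m.cast_nonneg n.cast_nonneg hsum h

/-- key inequality in the proof of Theorem 3.2: if `p < p'` are
consecutive primes with `(p'+1)² - (p+1)² > p'^{3/2} + p^{3/2}`, then `p' - p > (5/7)√p`. -/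
theorem stmt4 (p p' : ℕ) (hp : p.Prime) (hp' : p'.Prime) (hlt : p < p')
    (hcons : ∀ r : ℕ, p < r → r < p' → ¬ r.Prime)
    (h : Real.sqrt p' ^ 3 + Real.sqrt p ^ 3 < ((p' : ℝ) + 1) ^ 2 - ((p : ℝ) + 1) ^ 2) :
    (5 / 7 : ℝ) * Real.sqrt p < (p' : ℝ) - (p : ℝ) :=
  stmt4_general p p' h
end

section
/- The number of positive integers N ≤ X of the form N = m₁·m₂, where q is a prime power and m₁, m₂ are integers satisfying |m₁ - (q+1)| ≤ 2√q and |m₂ - (q+1)| ≤ 2√q, is O(X^{3/4}) as X → ∞. That is, there are constants C > 0 and X₀ such that for all X ≥ X₀, the cardinality of {N ∈ ℤ : 1 ≤ N ≤ X and ∃ prime power q, ∃ m₁, m₂ ∈ ℤ with |m_i - (q+1)| ≤ 2√q for i = 1,2 and N = m₁m₂} is at most C·X^{3/4}. -/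
/-- The set of positive integers `N ≤ X` that are a product of two integers lying in the
Hasse interval `[q + 1 - 2√q, q + 1 + 2√q]` of a common prime power `q`. -/
def hasseProductSet (X : ℝ) : Set ℕ :=
  {N : ℕ | 1 ≤ N ∧ (N : ℝ) ≤ X ∧
    ∃ q : ℕ, IsPrimePow q ∧ ∃ m₁ m₂ : ℤ,
      |(m₁ : ℝ) - ((q : ℝ) + 1)| ≤ 2 * Real.sqrt q ∧
      |(m₂ : ℝ) - ((q : ℝ) + 1)| ≤ 2 * Real.sqrt q ∧
      (N : ℤ) = m₁ * m₂}

/-!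
Two numbers `a ≤ b` in the Hasse interval of `q` satisfy `√q - 1 ≤ √a` and `√b ≤ √q + 1`, so
`√b ≤ √a + 2`, whatever `q` is; equivalently `b - a ≤ 4√a + 4`. If moreover `a b ≤ X`, then
`a ≤ √X`, which leaves `O(X^{1/2})` values for `a` and `O(X^{1/4})` values for `b - a`.
-/

/-- The Hasse interval `[(√q - 1)², (√q + 1)²]`, for an arbitrary real `q` in place of a prime
power. It is meaningful for `0 ≤ q` only, since `√q = 0` for negative `q`. -/
def hasseInterval (q : ℝ) : Set ℝ :=
  Set.Icc ((√q - 1) ^ 2) ((√q + 1) ^ 2)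

/-- The positive integers `N ≤ X` that are a product of two integers lying in a common Hasse
interval: the analogue of `hasseProductSet` in which `q` runs over all nonnegative reals. -/
def realHasseProductSet (X : ℝ) : Set ℕ :=
  {N : ℕ | 1 ≤ N ∧ (N : ℝ) ≤ X ∧
    ∃ q : ℝ, 0 ≤ q ∧ ∃ m₁ m₂ : ℤ,
      (m₁ : ℝ) ∈ hasseInterval q ∧ (m₂ : ℝ) ∈ hasseInterval q ∧ (N : ℤ) = m₁ * m₂}

section HasseInterval

variable {q a b : ℝ}

theorem mem_hasseInterval_iff_abs_sub_le (hq : 0 ≤ q) :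
    a ∈ hasseInterval q ↔ |a - (q + 1)| ≤ 2 * √q := by
  rw [hasseInterval, Set.mem_Icc, abs_le, sub_sq, add_sq, Real.sq_sqrt hq]
  constructor <;> rintro ⟨hlower, hupper⟩ <;> constructor <;> linarith

theorem nonneg_of_mem_hasseInterval (ha : a ∈ hasseInterval q) : 0 ≤ a :=
  (sq_nonneg _).trans ha.1

theorem sqrt_le_sqrt_add_two_of_mem_hasseInterval
    (ha : a ∈ hasseInterval q) (hb : b ∈ hasseInterval q) : √b ≤ √a + 2 := by
  have hlower : √q - 1 ≤ √a := Real.le_sqrt_of_sq_le ha.1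
  have hupper : √b ≤ √q + 1 := (Real.sqrt_le_left (by positivity)).2 hb.2
  linarith

theorem sub_le_of_mem_hasseInterval
    (ha : a ∈ hasseInterval q) (hb : b ∈ hasseInterval q) : b - a ≤ 4 * √a + 4 := by
  have hsq : b ≤ (√a + 2) ^ 2 :=
    (Real.sqrt_le_left (by positivity)).1 (sqrt_le_sqrt_add_two_of_mem_hasseInterval ha hb)
  rw [add_sq, Real.sq_sqrt (nonneg_of_mem_hasseInterval ha)] at hsq
  linarith

end HasseInterval

theorem hasseProductSet_subset_realHasseProductSet (X : ℝ) :
    hasseProductSet X ⊆ realHasseProductSet X := by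
  rintro N ⟨hN, hNX, q, -, m₁, m₂, hm₁, hm₂, hprod⟩
  have hq : (0 : ℝ) ≤ q := q.cast_nonneg
  exact ⟨hN, hNX, q, hq, m₁, m₂, (mem_hasseInterval_iff_abs_sub_le hq).2 hm₁,
    (mem_hasseInterval_iff_abs_sub_le hq).2 hm₂, hprod⟩

theorem exists_ordered_factors_of_mem_realHasseProductSet {X : ℝ} {N : ℕ}
    (hN : N ∈ realHasseProductSet X) :
    ∃ q : ℝ, ∃ a b : ℕ, a ≤ b ∧ (a : ℝ) ∈ hasseInterval q ∧ (b : ℝ) ∈ hasseInterval q ∧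
      N = a * b := by
  obtain ⟨-, -, q, -, m₁, m₂, hm₁, hm₂, hprod⟩ := hN
  lift m₁ to ℕ using mod_cast nonneg_of_mem_hasseInterval hm₁
  lift m₂ to ℕ using mod_cast nonneg_of_mem_hasseInterval hm₂
  norm_cast at hprod
  obtain hle | hle := le_total m₁ m₂
  · exact ⟨q, m₁, m₂, hle, hm₁, hm₂, hprod⟩
  · exact ⟨q, m₂, m₁, hle, hm₂, hm₁, hprod.trans (mul_comm _ _)⟩

theorem exists_eq_mul_add_of_mem_realHasseProductSet {X : ℝ} {N : ℕ}
    (hN : N ∈ realHasseProductSet X) :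
    ∃ a d : ℕ, 1 ≤ a ∧ (a : ℝ) ≤ √X ∧ (d : ℝ) ≤ 4 * √√X + 4 ∧ N = a * (a + d) := by
  obtain ⟨q, a, b, hab, ha, hb, rfl⟩ := exists_ordered_factors_of_mem_realHasseProductSet hN
  obtain ⟨hpos, hle, -⟩ := hN
  obtain ⟨d, rfl⟩ := Nat.exists_eq_add_of_le hab
  have ha_le : (a : ℝ) ≤ √X := by
    refine Real.le_sqrt_of_sq_le (le_trans ?_ hle)
    exact_mod_cast (sq a).trans_le (Nat.mul_le_mul_left a hab)
  refine ⟨a, d, Nat.pos_of_mul_pos_right hpos, ha_le, ?_, rfl⟩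
  calc (d : ℝ) = (a + d : ℕ) - a := by push_cast; ring
    _ ≤ 4 * √a + 4 := sub_le_of_mem_hasseInterval ha hb
    _ ≤ 4 * √√X + 4 := by gcongr

theorem realHasseProductSet_subset_image (X : ℝ) :
    realHasseProductSet X ⊆
      ((Finset.Icc 1 ⌊√X⌋₊ ×ˢ Finset.Iic ⌊4 * √√X + 4⌋₊).image
        fun p : ℕ × ℕ => p.1 * (p.1 + p.2) : Finset ℕ) := by
  intro N hN
  obtain ⟨a, d, ha_pos, ha, hd, rfl⟩ := exists_eq_mul_add_of_mem_realHasseProductSet hN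
  refine Finset.mem_image_of_mem (fun p : ℕ × ℕ => p.1 * (p.1 + p.2)) (a := (a, d)) ?_
  simp only [Finset.mem_product, Finset.mem_Icc, Finset.mem_Iic]
  exact ⟨⟨ha_pos, Nat.le_floor ha⟩, Nat.le_floor hd⟩

theorem finite_realHasseProductSet (X : ℝ) : (realHasseProductSet X).Finite :=
  (Finset.finite_toSet _).subset (realHasseProductSet_subset_image X)

theorem ncard_realHasseProductSet_le (X : ℝ) :
    (realHasseProductSet X).ncard ≤ ⌊√X⌋₊ * (⌊4 * √√X + 4⌋₊ + 1) := by
  calc (realHasseProductSet X).ncard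
      ≤ ((Finset.Icc 1 ⌊√X⌋₊ ×ˢ Finset.Iic ⌊4 * √√X + 4⌋₊).image
          fun p : ℕ × ℕ => p.1 * (p.1 + p.2)).card := by
        rw [← Set.ncard_coe_finset]
        exact Set.ncard_le_ncard (realHasseProductSet_subset_image X) (Finset.finite_toSet _)
    _ ≤ (Finset.Icc 1 ⌊√X⌋₊ ×ˢ Finset.Iic ⌊4 * √√X + 4⌋₊).card := Finset.card_image_le
    _ = ⌊√X⌋₊ * (⌊4 * √√X + 4⌋₊ + 1) := by
        rw [Finset.card_product, Nat.card_Icc, Nat.card_Iic, Nat.add_sub_cancel]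

theorem floor_mul_floor_four_mul_sqrt_le {x : ℝ} (hx : 0 ≤ x) :
    (⌊x⌋₊ * (⌊4 * √x + 4⌋₊ + 1) : ℝ) ≤ 9 * (x * √x) := by
  obtain hlt | hge := lt_or_ge x 1
  · rw [Nat.floor_eq_zero.2 hlt, Nat.cast_zero, zero_mul]
    positivity
  · have hone : 1 ≤ √x := Real.one_le_sqrt.2 hge
    have hfloor : (⌊4 * √x + 4⌋₊ : ℝ) ≤ 4 * √x + 4 := Nat.floor_le (by positivity)
    calc (⌊x⌋₊ * (⌊4 * √x + 4⌋₊ + 1) : ℝ) ≤ x * (9 * √x) := by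
          gcongr
          · exact Nat.floor_le hx
          · linarith
      _ = 9 * (x * √x) := by ring

theorem sqrt_mul_sqrt_sqrt {x : ℝ} (hx : 0 ≤ x) : √x * √√x = x ^ (3 / 4 : ℝ) := by
  rw [Real.sqrt_eq_rpow, Real.sqrt_eq_rpow, ← Real.rpow_mul hx,
    ← Real.rpow_add_of_nonneg hx (by norm_num) (by norm_num)]
  norm_num

theorem stmt5_general {X : ℝ} (hX : 0 ≤ X) :
    (realHasseProductSet X).Finite ∧
      ((realHasseProductSet X).ncard : ℝ) ≤ 9 * X ^ ((3 : ℝ) / 4) := by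
  refine ⟨finite_realHasseProductSet X, ?_⟩
  calc ((realHasseProductSet X).ncard : ℝ)
      ≤ ⌊√X⌋₊ * (⌊4 * √√X + 4⌋₊ + 1) := mod_cast ncard_realHasseProductSet_le X
    _ ≤ 9 * (√X * √√X) := floor_mul_floor_four_mul_sqrt_le (Real.sqrt_nonneg X)
    _ = 9 * X ^ ((3 : ℝ) / 4) := by rw [sqrt_mul_sqrt_sqrt hX]

/-- Proposition 4.1: the number of positive integers `N ≤ X` that are a
product of two integers in a common Hasse interval is `O(X^{3/4})`. -/
theorem stmt5 :
    ∃ C : ℝ, 0 < C ∧ ∃ X₀ : ℝ, ∀ X : ℝ, X₀ ≤ X →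
      (hasseProductSet X).Finite ∧
      ((hasseProductSet X).ncard : ℝ) ≤ C * X ^ ((3 : ℝ) / 4) := by
  refine ⟨9, by norm_num, 0, fun X hX => ?_⟩
  obtain ⟨hfin, hcard⟩ := stmt5_general hX
  have hsub := hasseProductSet_subset_realHasseProductSet X
  exact ⟨hfin.subset hsub, (Nat.cast_le.2 (Set.ncard_le_ncard hsub hfin)).trans hcard⟩
end

section
/- There is an integer B₀ > 0 such that for every integer B ≥ B₀ the following holds: if S is a set of subfields of ℂ such that every K ∈ S is a quartic CM-field (a degree-4 number field that is totally complex and admits an automorphism σ : K → K with φ ∘ σ equal to the complex conjugate of φ for every embedding φ : K → ℂ) with absolute discriminant at most B, and no two distinct elements of S are isomorphic as fields, then the cardinality of S is at most B. -/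
/-!
Let `K` be a quartic CM-field with real quadratic subfield `F` of discriminant `d` and complex
conjugation `c`. The lattice `(1 - c) 𝓞_K` has rank two, and the trace form `Tr_{K/ℚ}(β²)` on it
has determinant `4 disc K / d`, so reduction of binary quadratic forms gives a nonzero `β` in it
such that `y = N_{K/F} β` has trace `u` with `3u²d ≤ 4 disc K`. Writing `2y = u + v√d`, total
positivity of `y = -β²` says `v²d ≤ u²`, and `K = ℚ(√d, i√((u + v√d) / 2))` is determined as a
subfield of `ℂ` by `(d, u, v)`. As also `d² ≤ disc K`, at most
`(4/3) B ∑ d^(-3/2) + O(B^(3/4))` triples occur for `disc K ≤ B`; here `d` runs over the integers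
`≥ 5` that are `0` or `1` modulo `4`, for which the sum is at most `3/5`.
-/

open NumberField

theorem exists_int_binaryForm_sq_le {A B C : ℝ} (hΔ : 0 < 4 * A * C - B ^ 2) :
    ∃ m n : ℤ, (m ≠ 0 ∨ n ≠ 0) ∧
      3 * (A * m ^ 2 + B * m * n + C * n ^ 2) ^ 2 ≤ 4 * A * C - B ^ 2 := by
  wlog hA : 0 < A generalizing A B C
  · have hA_ne : A ≠ 0 := by
      rintro rfl
      linarith [sq_nonneg B]
    obtain ⟨m, n, hmn, h⟩ := this (A := -A) (B := -B) (C := -C) (by linarith)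
      (by linarith [lt_of_le_of_ne (not_lt.mp hA) hA_ne])
    exact ⟨m, n, hmn, by linarith⟩
  set s := √(4 * A * C - B ^ 2)
  have hs_sq : s ^ 2 = 4 * A * C - B ^ 2 := Real.sq_sqrt hΔ.le
  have hs_pos : 0 < s := Real.sqrt_pos.mpr hΔ
  let z : UpperHalfPlane := ⟨⟨B / (2 * A), s / (2 * A)⟩, by positivity⟩
  obtain ⟨g, hg⟩ := ModularGroup.exists_smul_mem_fd z
  have hform : A * Complex.normSq (g 1 0 * z + g 1 1)
      = A * (g 1 1 : ℝ) ^ 2 + B * g 1 1 * g 1 0 + C * (g 1 0 : ℝ) ^ 2 := by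
    have hC : C = (s ^ 2 + B ^ 2) / (4 * A) := by field_simp; linarith
    simp only [z, Complex.normSq_apply, Complex.add_re, Complex.add_im, Complex.mul_re,
      Complex.mul_im, Complex.intCast_re, Complex.intCast_im]
    rw [hC]
    field_simp
    ring
  have hden : 0 < Complex.normSq (g 1 0 * z + g 1 1) := by
    rw [← ModularGroup.denom_apply]
    exact Complex.normSq_pos.mpr (UpperHalfPlane.denom_ne_zero _ z)
  refine ⟨g 1 1, g 1 0, ?_, ?_⟩
  · by_contra! h
    simp [h] at hden
  · have him : 3 ≤ 4 * (g • z).im ^ 2 := ModularGroup.three_le_four_mul_im_sq_of_mem_fd hg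
    rw [ModularGroup.im_smul_eq_div_normSq, ModularGroup.denom_apply, div_pow, mul_div_assoc',
      le_div_iff₀ (by positivity)] at him
    have hz : z.im = s / (2 * A) := rfl
    rw [← hform, ← hs_sq]
    calc 3 * (A * Complex.normSq (g 1 0 * z + g 1 1)) ^ 2
        = A ^ 2 * (3 * Complex.normSq (g 1 0 * z + g 1 1) ^ 2) := by ring
      _ ≤ A ^ 2 * (4 * z.im ^ 2) := by gcongr
      _ = s ^ 2 := by rw [hz]; field_simp; ring

theorem exists_int_trace_sq_le_discr {R : Type*} [CommRing R] {b : Fin 2 → R}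
    (hb : 0 < Algebra.discr ℤ b) :
    ∃ m n : ℤ, (m ≠ 0 ∨ n ≠ 0) ∧
      3 * Algebra.trace ℤ R ((m • b 0 + n • b 1) * (m • b 0 + n • b 1)) ^ 2
        ≤ 4 * Algebra.discr ℤ b := by
  set t : Fin 2 → Fin 2 → ℤ := fun i j ↦ Algebra.trace ℤ R (b i * b j)
  have h_comm : t 1 0 = t 0 1 := by simp only [t, mul_comm]
  have h_discr : Algebra.discr ℤ b = t 0 0 * t 1 1 - t 0 1 ^ 2 := by
    rw [sq, Algebra.discr_def, Matrix.det_fin_two]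
    nth_rewrite 2 [← h_comm]
    rfl
  have h_value (m n : ℤ) : Algebra.trace ℤ R ((m • b 0 + n • b 1) * (m • b 0 + n • b 1))
      = t 0 0 * m ^ 2 + 2 * t 0 1 * m * n + t 1 1 * n ^ 2 := by
    simp only [add_mul, mul_add, smul_mul_smul_comm, map_add, map_smul, smul_eq_mul]
    linear_combination m * n * h_comm
  rw [h_discr] at hb ⊢
  obtain ⟨m, n, hmn, h⟩ := exists_int_binaryForm_sq_le (A := t 0 0) (B := 2 * t 0 1) (C := t 1 1)
    (by exact_mod_cast (by linarith : 0 < 4 * t 0 0 * t 1 1 - (2 * t 0 1) ^ 2))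
  refine ⟨m, n, hmn, ?_⟩
  rw [h_value]
  have h' : 3 * (t 0 0 * m ^ 2 + 2 * t 0 1 * m * n + t 1 1 * n ^ 2) ^ 2
      ≤ 4 * t 0 0 * t 1 1 - (2 * t 0 1) ^ 2 := by exact_mod_cast h
  linarith

section IsQuadraticExtension

variable {F K : Type*} [Field F] [Field K] [Algebra F K] [Algebra.IsQuadraticExtension F K]

theorem exists_eq_algebraMap_add_algebraMap_mul {β : K} (hβ : β ∉ (algebraMap F K).range) (z : K) :
    ∃ a b : F, z = algebraMap F K a + algebraMap F K b * β := by
  have hli : LinearIndependent F ![1, β] := by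
    refine (LinearIndependent.pair_iff' one_ne_zero).mpr fun a ha ↦ hβ ⟨a, ?_⟩
    rw [← ha, Algebra.smul_def, mul_one]
  have hspan := hli.span_eq_top_of_card_eq_finrank'
    (by rw [Fintype.card_fin, Algebra.IsQuadraticExtension.finrank_eq_two F K])
  have hz : z ∈ Submodule.span F {1, β} := by
    rw [← Matrix.range_cons_cons_empty 1 β ![], hspan]
    trivial
  obtain ⟨a, b, h⟩ := Submodule.mem_span_pair.mp hz
  exact ⟨a, b, by rw [← h, Algebra.smul_def, Algebra.smul_def, mul_one]⟩

variable [Algebra.IsSeparable F K] {σ : Gal(K/F)}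

theorem univ_gal_eq_pair [DecidableEq Gal(K/F)] (hσ : σ ≠ 1) :
    (Finset.univ : Finset Gal(K/F)) = {1, σ} := by
  have hcard : Fintype.card Gal(K/F) = 2 := by
    rw [← Nat.card_eq_fintype_card, IsGalois.card_aut_eq_finrank,
      Algebra.IsQuadraticExtension.finrank_eq_two]
  exact (Finset.eq_univ_of_card _ (by rw [hcard, Finset.card_pair hσ.symm])).symm

variable (F K) in
theorem exists_gal_ne_one : ∃ σ : Gal(K/F), σ ≠ 1 := by
  have hcard : 1 < Nat.card Gal(K/F) := by
    rw [IsGalois.card_aut_eq_finrank, Algebra.IsQuadraticExtension.finrank_eq_two]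
    exact one_lt_two
  have := Finite.one_lt_card_iff_nontrivial.mp hcard
  exact exists_ne 1

theorem algebraMap_trace_eq_add (hσ : σ ≠ 1) (x : K) :
    algebraMap F K (Algebra.trace F K x) = x + σ x := by
  classical
  rw [trace_eq_sum_automorphisms, univ_gal_eq_pair hσ, Finset.sum_pair hσ.symm,
    AlgEquiv.one_apply]

theorem algebraMap_norm_eq_mul (hσ : σ ≠ 1) (x : K) :
    algebraMap F K (Algebra.norm F x) = x * σ x := by
  classical
  rw [Algebra.norm_eq_prod_automorphisms, univ_gal_eq_pair hσ, Finset.prod_pair hσ.symm,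
    AlgEquiv.one_apply]

theorem gal_apply_apply (hσ : σ ≠ 1) (x : K) : σ (σ x) = x := by
  have h := congrArg σ (algebraMap_trace_eq_add hσ x)
  rw [AlgEquiv.commutes, algebraMap_trace_eq_add hσ, map_add] at h
  linear_combination -h

theorem mem_range_algebraMap_of_gal_apply_eq (hσ : σ ≠ 1) {x : K} (hx : σ x = x) :
    x ∈ (algebraMap F K).range := by
  classical
  refine (IsGalois.mem_range_algebraMap_iff_fixed x).mpr fun g ↦ ?_
  have hg : g ∈ ({1, σ} : Finset Gal(K/F)) := univ_gal_eq_pair hσ ▸ Finset.mem_univ g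
  rcases Finset.mem_insert.mp hg with rfl | hg
  · rfl
  · rwa [Finset.mem_singleton.mp hg]

end IsQuadraticExtension

section Discriminant

variable {R M : Type*} [CommRing R] [AddCommGroup M] [Module R M]
  {ι κ : Type*} [Fintype ι] [Fintype κ] [DecidableEq ι] [DecidableEq κ]

theorem det_toMatrix_sumQuot_quotKerEquivRange (f : M →ₗ[R] M) (c : Module.Basis ι R f.ker)
    (b : Module.Basis κ R f.range) {r : R} (hf : ∀ x ∈ f.range, f x = r • x) :
    ((c.sumQuot (b.map f.quotKerEquivRange.symm)).toMatrix
      (Sum.elim (fun i ↦ (c i : M)) (fun j ↦ (b j : M)))).det = r ^ Fintype.card κ := by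
  set e := c.sumQuot (b.map f.quotKerEquivRange.symm)
  set P := e.toMatrix (Sum.elim (fun i ↦ (c i : M)) (fun j ↦ (b j : M))) with hP
  have h_ker (i : ι) : e.repr (c i) = Finsupp.single (Sum.inl i) 1 :=
    Module.Basis.sumQuot_repr_left c _ i
  have h_range (j k : κ) : e.repr (b j) (Sum.inr k) = r * (1 : Matrix κ κ R) k j := by
    have hb : f.quotKerEquivRange (f.ker.mkQ (b j)) = r • b j := Subtype.ext (hf _ (b j).2)
    rw [Module.Basis.sumQuot_repr_inr, Module.Basis.map_repr, LinearEquiv.trans_apply,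
      LinearEquiv.symm_symm, hb, map_smul, Module.Basis.repr_self, Finsupp.smul_apply, smul_eq_mul,
      Finsupp.single_apply, Matrix.one_apply]
    simp only [eq_comm]
  have hblocks : P = Matrix.fromBlocks 1 P.toBlocks₁₂ 0 (r • (1 : Matrix κ κ R)) := by
    ext (i | k) (i' | j)
    · simp [hP, Module.Basis.toMatrix_apply, h_ker, Finsupp.single_apply, Matrix.one_apply, eq_comm]
    · rfl
    · simp [hP, Module.Basis.toMatrix_apply, h_ker]
    · exact h_range j k
  rw [hblocks, Matrix.det_fromBlocks_zero₂₁, Matrix.det_one, one_mul, Matrix.det_smul,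
    Matrix.det_one, mul_one]

variable {S : Type*} [CommRing S] [Algebra R S]

theorem discr_sumElim_of_trace_mul_eq_zero {v : ι → S} {w : κ → S}
    (h : ∀ i j, Algebra.trace R S (v i * w j) = 0) :
    Algebra.discr R (Sum.elim v w) = Algebra.discr R v * Algebra.discr R w := by
  have hblocks : Algebra.traceMatrix R (Sum.elim v w)
      = Matrix.fromBlocks (Algebra.traceMatrix R v) 0 0 (Algebra.traceMatrix R w) := by
    ext (i | i) (j | j)
    · rfl
    · exact h i j
    · exact (congrArg _ (mul_comm _ _)).trans (h j i)
    · rfl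
  rw [Algebra.discr_def, hblocks, Matrix.det_fromBlocks_zero₂₁, Algebra.discr_def,
    Algebra.discr_def]

end Discriminant

section RingOfIntegers

theorem trace_int_eq_zero_of_apply_eq_neg {K : Type*} [Field K] [NumberField K] (σ : K ≃ₐ[ℚ] K)
    {x : 𝓞 K} (hx : σ x = -x) : Algebra.trace ℤ (𝓞 K) x = 0 := by
  have h := Algebra.trace_eq_of_algEquiv σ (x : K)
  rw [hx, map_neg] at h
  have hcoe : ((Algebra.trace ℤ (𝓞 K) x : ℤ) : ℚ) = 0 := by
    rw [Algebra.coe_trace_int]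
    linarith
  exact_mod_cast hcoe

variable {F K : Type*} [Field F] [Field K] [Algebra F K]

/-- The endomorphism `x ↦ x - σ x` of the ring of integers of `K`. Its kernel is the ring of
integers of the fixed field of `σ`. When `σ` has order `2`, it serves to compare `𝓞 K` with the
sublattice spanned by that kernel and the range, on which `σ` acts as `-1`. -/
noncomputable def subGal (σ : Gal(K/F)) : 𝓞 K →ₗ[ℤ] 𝓞 K :=
  (AddMonoidHom.id _ - (RingOfIntegers.mapRingHom (σ : K →+* K)).toAddMonoidHom).toIntLinearMap

@[simp]
theorem coe_subGal (σ : Gal(K/F)) (x : 𝓞 K) : (subGal σ x : K) = x - σ x :=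
  rfl

variable [Algebra.IsQuadraticExtension F K] [Algebra.IsSeparable F K] {σ : Gal(K/F)}

theorem gal_apply_of_mem_range_subGal (hσ : σ ≠ 1) {β : 𝓞 K} (hβ : β ∈ (subGal σ).range) :
    σ (β : K) = -β := by
  obtain ⟨x, rfl⟩ := hβ
  rw [coe_subGal, map_sub, gal_apply_apply hσ, neg_sub]

theorem subGal_apply_of_mem_range (hσ : σ ≠ 1) {β : 𝓞 K} (hβ : β ∈ (subGal σ).range) :
    subGal σ β = (2 : ℤ) • β := by
  refine RingOfIntegers.ext ?_
  rw [coe_subGal, gal_apply_of_mem_range_subGal hσ hβ, sub_neg_eq_add, two_smul]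
  rfl

theorem ker_subGal (hσ : σ ≠ 1) :
    (subGal σ).ker = (IsScalarTower.toAlgHom ℤ (𝓞 F) (𝓞 K)).toLinearMap.range := by
  ext x
  rw [LinearMap.mem_ker, RingOfIntegers.ext_iff, coe_subGal]
  change (x : K) - σ x = 0 ↔ _
  rw [sub_eq_zero]
  constructor
  · intro h
    obtain ⟨y, hy⟩ := mem_range_algebraMap_of_gal_apply_eq hσ h.symm
    have hy_int : IsIntegral ℤ y := by
      rw [← isIntegral_algebraMap_iff (algebraMap F K).injective, hy]
      exact x.isIntegral_coe
    exact ⟨⟨y, hy_int⟩, RingOfIntegers.ext hy⟩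
  · rintro ⟨y, rfl⟩
    exact (σ.commutes y).symm

/-- The ring of integers of the fixed field, as the kernel of `subGal σ`. -/
noncomputable def kerSubGalEquiv (hσ : σ ≠ 1) : 𝓞 F ≃ₗ[ℤ] (subGal σ).ker :=
  (LinearEquiv.ofInjective _ (FaithfulSMul.algebraMap_injective (𝓞 F) (𝓞 K))).trans
    (LinearEquiv.ofEq _ _ (ker_subGal hσ).symm)

end RingOfIntegers

section NumberField

variable {F K : Type*} [Field F] [NumberField F] [Field K] [NumberField K] [Algebra F K]
  [Algebra.IsQuadraticExtension F K]

theorem trace_int_algebraMap (y : 𝓞 F) :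
    Algebra.trace ℤ (𝓞 K) (algebraMap (𝓞 F) (𝓞 K) y) = 2 * Algebra.trace ℤ (𝓞 F) y := by
  have h : Algebra.trace ℚ K (algebraMap F K y) = 2 * Algebra.trace ℚ F y := by
    rw [← Algebra.trace_trace (S := F), Algebra.trace_algebraMap,
      Algebra.IsQuadraticExtension.finrank_eq_two, map_nsmul, nsmul_eq_mul, Nat.cast_ofNat]
  have hcoe : ((Algebra.trace ℤ (𝓞 K) (algebraMap (𝓞 F) (𝓞 K) y) : ℤ) : ℚ)
      = 2 * (Algebra.trace ℤ (𝓞 F) y : ℤ) := by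
    rw [Algebra.coe_trace_int, Algebra.coe_trace_int]
    exact h
  exact_mod_cast hcoe

theorem discr_algebraMap_comp {ι : Type*} [Fintype ι] [DecidableEq ι] (c : ι → 𝓞 F) :
    Algebra.discr ℤ (algebraMap (𝓞 F) (𝓞 K) ∘ c)
      = 2 ^ Fintype.card ι * Algebra.discr ℤ c := by
  have hmat : Algebra.traceMatrix ℤ (algebraMap (𝓞 F) (𝓞 K) ∘ c)
      = (2 : ℤ) • Algebra.traceMatrix ℤ c := by
    ext i j
    simp only [Algebra.traceMatrix_apply, Algebra.traceForm_apply, Function.comp_apply, ← map_mul,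
      trace_int_algebraMap, Matrix.smul_apply, smul_eq_mul]
  rw [Algebra.discr_def, hmat, Matrix.det_smul, Algebra.discr_def]

variable {σ : Gal(K/F)}

theorem finrank_range_subGal (hσ : σ ≠ 1) :
    Module.finrank ℤ (subGal σ).range = Module.finrank ℚ F := by
  have h := Submodule.finrank_quotient_add_finrank (subGal σ).ker
  rw [(subGal σ).quotKerEquivRange.finrank_eq, ← (kerSubGalEquiv hσ).finrank_eq,
    RingOfIntegers.rank, RingOfIntegers.rank, ← Module.finrank_mul_finrank ℚ F K,
    Algebra.IsQuadraticExtension.finrank_eq_two F K] at h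
  omega

-- The elements of `𝓞 F` and of the range of `1 - σ` are orthogonal for the trace form, and together
-- they span a sublattice of index `2 ^ [F : ℚ]` of `𝓞 K`.
theorem discr_mul_discr_range_subGal (hσ : σ ≠ 1) {κ : Type*} [Fintype κ] [DecidableEq κ]
    (b : Module.Basis κ ℤ (subGal σ).range) :
    discr F * Algebra.discr ℤ (fun j ↦ (b j : 𝓞 K)) = 2 ^ Module.finrank ℚ F * discr K := by
  classical
  set c := RingOfIntegers.basis F
  set c' := c.map (kerSubGalEquiv hσ)
  set e := c'.sumQuot (b.map (subGal σ).quotKerEquivRange.symm)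
  set v : _ ⊕ κ → 𝓞 K := Sum.elim (fun i ↦ (c' i : 𝓞 K)) (fun j ↦ (b j : 𝓞 K)) with hv
  have hcard_c := Module.finrank_eq_card_basis c
  have hcard_b := Module.finrank_eq_card_basis b
  rw [RingOfIntegers.rank] at hcard_c
  rw [finrank_range_subGal hσ] at hcard_b
  have h_index : Algebra.discr ℤ v = (2 ^ Module.finrank ℚ F) ^ 2 * discr K := by
    rw [← e.toMatrix_map_vecMul v, Algebra.discr_of_matrix_vecMul, discr_eq_discr,
      det_toMatrix_sumQuot_quotKerEquivRange _ c' b fun _ ↦ subGal_apply_of_mem_range hσ, hcard_b]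
  have h_neg (i) (j : κ) : σ ((c' i : 𝓞 K) * (b j : 𝓞 K) : K) = -((c' i : 𝓞 K) * (b j : 𝓞 K)) := by
    have hc : σ (c' i : 𝓞 K) = (c' i : 𝓞 K) := σ.commutes (c i)
    rw [map_mul, hc, gal_apply_of_mem_range_subGal hσ (b j).2, mul_neg]
  have h_orth : Algebra.discr ℤ v
      = (2 ^ Module.finrank ℚ F * discr F) * Algebra.discr ℤ (fun j ↦ (b j : 𝓞 K)) := by
    rw [hv, discr_sumElim_of_trace_mul_eq_zero fun i j ↦
      trace_int_eq_zero_of_apply_eq_neg (σ.restrictScalars ℚ) (h_neg i j), hcard_c,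
      ← discr_eq_discr F c]
    exact congrArg (· * _) (discr_algebraMap_comp c)
  refine mul_left_cancel₀ (pow_ne_zero (Module.finrank ℚ F) two_ne_zero) ?_
  linear_combination h_index - h_orth

theorem trace_int_mul_self_of_mem_range_subGal (hσ : σ ≠ 1) {β : 𝓞 K}
    (hβ : β ∈ (subGal σ).range) :
    Algebra.trace ℤ (𝓞 K) (β * β) = -(2 * Algebra.trace ℤ (𝓞 F) (RingOfIntegers.norm F β)) := by
  have h : β * β = -algebraMap (𝓞 F) (𝓞 K) (RingOfIntegers.norm F β) := by
    refine RingOfIntegers.ext ?_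
    change (β * β : K) = -((algebraMap _ _ (RingOfIntegers.norm F β) : 𝓞 K) : K)
    rw [RingOfIntegers.coe_algebraMap_norm, algebraMap_norm_eq_mul hσ,
      gal_apply_of_mem_range_subGal hσ hβ, mul_neg, neg_neg]
  rw [h, map_neg, trace_int_algebraMap]

end NumberField

section QuadraticField

variable {F : Type*} [Field F] [NumberField F] [Algebra.IsQuadraticExtension ℚ F] {τ : Gal(F/ℚ)}

theorem add_gal_eq_trace_int (hτ : τ ≠ 1) (y : 𝓞 F) :
    (y + τ y : F) = (Algebra.trace ℤ (𝓞 F) y : ℤ) := by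
  rw [← algebraMap_trace_eq_add hτ, ← Algebra.coe_trace_int, eq_ratCast, Rat.cast_intCast]

theorem mul_gal_eq_norm_int (hτ : τ ≠ 1) (y : 𝓞 F) :
    (y * τ y : F) = (Algebra.norm ℤ y : ℤ) := by
  rw [← algebraMap_norm_eq_mul hτ, ← Algebra.coe_norm_int, eq_ratCast, Rat.cast_intCast]

theorem exists_subGal_sq_eq_discr (hτ : τ ≠ 1) :
    ∃ w : 𝓞 F, (subGal τ w : F) ^ 2 = discr F ∧
      ∀ y : 𝓞 F, ∃ v : ℤ, (y - τ y : F) = v * subGal τ w := by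
  have h_rank : Module.finrank ℤ (subGal τ).range = 1 := by
    rw [finrank_range_subGal hτ, Module.finrank_self]
  let b := Module.finBasisOfFinrankEq ℤ (subGal τ).range h_rank
  obtain ⟨w, hw⟩ := (b 0).2
  refine ⟨w, ?_, fun y ↦ ?_⟩
  · have h_discr := discr_mul_discr_range_subGal hτ b
    rw [Rat.numberField_discr, one_mul, Module.finrank_self, pow_one, Algebra.discr_def,
      Matrix.det_fin_one, Algebra.traceMatrix_apply, Algebra.traceForm_apply, ← hw] at h_discr
    have h_trace : (subGal τ w * subGal τ w : F) + τ (subGal τ w * subGal τ w) = 2 * discr F := by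
      exact_mod_cast h_discr ▸ add_gal_eq_trace_int hτ (subGal τ w * subGal τ w)
    rw [map_mul, gal_apply_of_mem_range_subGal hτ ⟨w, rfl⟩] at h_trace
    linear_combination h_trace / 2
  · have hy := congrArg (fun z : (subGal τ).range ↦ ((z : 𝓞 F) : F))
      (b.sum_repr ⟨subGal τ y, y, rfl⟩)
    refine ⟨b.repr ⟨subGal τ y, y, rfl⟩ 0, ?_⟩
    rw [Fin.sum_univ_one] at hy
    simpa [hw] using hy.symm

variable (F) in
theorem discr_emod_four : discr F % 4 = 0 ∨ discr F % 4 = 1 := by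
  obtain ⟨τ, hτ⟩ := exists_gal_ne_one ℚ F
  obtain ⟨w, hw, -⟩ := exists_subGal_sq_eq_discr hτ
  have h : discr F = Algebra.trace ℤ (𝓞 F) w ^ 2 - 4 * Algebra.norm ℤ w := by
    have hF : (discr F : F)
        = (Algebra.trace ℤ (𝓞 F) w : ℤ) ^ 2 - 4 * (Algebra.norm ℤ w : ℤ) := by
      rw [← hw, ← add_gal_eq_trace_int hτ, ← mul_gal_eq_norm_int hτ, coe_subGal]
      ring
    exact_mod_cast hF
  rcases Int.even_or_odd' (Algebra.trace ℤ (𝓞 F) w) with ⟨k, hk | hk⟩ <;> rw [h, hk] <;> ring_nf <;>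
    omega

variable (F) in
theorem discr_ne_sq (k : ℤ) : discr F ≠ k ^ 2 := by
  intro hk
  obtain ⟨τ, hτ⟩ := exists_gal_ne_one ℚ F
  obtain ⟨w, hw, -⟩ := exists_subGal_sq_eq_discr hτ
  have h_pm : (subGal τ w : F) = k ∨ (subGal τ w : F) = -k := by
    rwa [hk, Int.cast_pow, sq_eq_sq_iff_eq_or_eq_neg] at hw
  have h_fix : τ (subGal τ w) = subGal τ w := by
    rcases h_pm with h | h <;> simp only [h, map_neg, map_intCast]
  have h_zero : (subGal τ w : F) = 0 :=
    self_eq_neg.mp (h_fix.symm.trans (gal_apply_of_mem_range_subGal hτ ⟨w, rfl⟩))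
  rw [h_zero, zero_pow two_ne_zero, eq_comm, Int.cast_eq_zero] at hw
  exact discr_ne_zero F hw

theorem five_le_discr (ψ : F →+* ℝ) : 5 ≤ discr F := by
  obtain ⟨τ, hτ⟩ := exists_gal_ne_one ℚ F
  obtain ⟨w, hw, -⟩ := exists_subGal_sq_eq_discr hτ
  have h_nonneg : (0 : ℝ) ≤ discr F := by
    rw [← map_intCast ψ, ← hw, map_pow]
    positivity
  have h0 : 0 ≤ discr F := by exact_mod_cast h_nonneg
  have h1 := discr_ne_sq F 1
  have h2 := discr_ne_sq F 2
  have h3 := discr_ne_zero F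
  have h4 := discr_emod_four F
  omega

theorem exists_map_eq_sqrt_discr (hτ : τ ≠ 1) (ψ : F →+* ℝ) :
    ∃ x : F, ψ x = √(discr F) ∧ τ x = -x ∧ ∀ y : 𝓞 F, ∃ v : ℤ, (y - τ y : F) = v * x := by
  obtain ⟨w, hw_sq, hw⟩ := exists_subGal_sq_eq_discr hτ
  have hw_neg := gal_apply_of_mem_range_subGal hτ ⟨w, rfl⟩
  have h_abs : |ψ (subGal τ w)| = √(discr F) := by
    rw [← Real.sqrt_sq_eq_abs, ← map_pow, hw_sq, map_intCast]
  rcases abs_choice (ψ (subGal τ w)) with h | h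
  · exact ⟨subGal τ w, h ▸ h_abs, hw_neg, hw⟩
  · refine ⟨-subGal τ w, by rw [map_neg, ← h, h_abs], by rw [map_neg, hw_neg], fun y ↦ ?_⟩
    obtain ⟨v, hv⟩ := hw y
    exact ⟨-v, by rw [hv, Int.cast_neg, neg_mul_neg]⟩

theorem exists_int_two_mul_map_eq (hτ : τ ≠ 1) (ψ : F →+* ℝ) (y : 𝓞 F) :
    ∃ v : ℤ, 2 * ψ y = (Algebra.trace ℤ (𝓞 F) y : ℤ) + v * √(discr F) ∧
      2 * ψ (τ y) = (Algebra.trace ℤ (𝓞 F) y : ℤ) - v * √(discr F) := by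
  obtain ⟨x, hx, -, h⟩ := exists_map_eq_sqrt_discr hτ ψ
  obtain ⟨v, hv⟩ := h y
  have h_add := congrArg ψ (add_gal_eq_trace_int hτ y)
  have h_sub := congrArg ψ hv
  rw [map_add, map_intCast] at h_add
  rw [map_sub, map_mul, map_intCast, hx] at h_sub
  exact ⟨v, by linarith, by linarith⟩

theorem exists_int_two_mul_map_eq_of_totallyPositive (ψ : F →+* ℝ) {y : 𝓞 F}
    (hy : ∀ φ : F →+* ℝ, 0 < φ y) :
    ∃ v : ℤ, 2 * ψ y = (Algebra.trace ℤ (𝓞 F) y : ℤ) + v * √(discr F) ∧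
      v ^ 2 * discr F ≤ Algebra.trace ℤ (𝓞 F) y ^ 2 ∧ 0 < Algebra.trace ℤ (𝓞 F) y := by
  obtain ⟨τ, hτ⟩ := exists_gal_ne_one ℚ F
  obtain ⟨v, hv, hv'⟩ := exists_int_two_mul_map_eq hτ ψ y
  have h_pos : 0 < ψ y := hy ψ
  have h_pos' : 0 < ψ (τ y) := hy (ψ.comp (τ : F →+* F))
  have h_abs : |v * √(discr F)| ≤ (Algebra.trace ℤ (𝓞 F) y : ℝ) :=
    abs_le.mpr ⟨by linarith, by linarith⟩
  refine ⟨v, hv, ?_, ?_⟩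
  · have hd : (0 : ℝ) ≤ discr F := by exact_mod_cast (five_le_discr ψ).trans' (by norm_num)
    have h_sq := pow_le_pow_left₀ (abs_nonneg _) h_abs 2
    rw [sq_abs, mul_pow, Real.sq_sqrt hd] at h_sq
    exact_mod_cast h_sq
  · have : (0 : ℝ) < (Algebra.trace ℤ (𝓞 F) y : ℤ) := by linarith
    exact_mod_cast this

end QuadraticField

section IsCMField

open NumberField.IsCMField ComplexEmbedding

theorem exists_ofReal_eq_map_algebraMap {F K : Type*} [Field F] [Field K] [Algebra F K]
    [CharZero F] [Algebra.IsAlgebraic ℚ F] [IsTotallyReal F] (φ : K →+* ℂ) :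
    ∃ ψ : F →+* ℝ, ∀ x : F, φ (algebraMap F K x) = ψ x :=
  have hφ := IsTotallyReal.complexEmbedding_isReal (φ.comp (algebraMap F K))
  ⟨hφ.embedding, fun x ↦ (IsReal.coe_embedding_apply hφ x).symm⟩

variable {K : Type*} [Field K] [NumberField K]

theorem discr_pos_of_isTotallyComplex_of_finrank_eq_four [IsTotallyComplex K]
    (hK : Module.finrank ℚ K = 4) : 0 < discr K := by
  rw [← Int.sign_eq_one_iff_pos, sign_discr]
  have h : InfinitePlace.nrComplexPlaces K = 2 := by
    have := IsTotallyComplex.finrank K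
    omega
  rw [h, neg_one_sq]

theorem isCMField_of_forall_apply_eq_conj [IsTotallyComplex K] {σ : K ≃+* K}
    (hσ : ∀ (φ : K →+* ℂ) (x : K), φ (σ x) = starRingEnd ℂ (φ x)) : IsCMField K := by
  let φ : K →+* ℂ := Classical.choice inferInstance
  have h_sq : σ ^ 2 = 1 := by
    ext x
    exact φ.injective (by rw [sq, RingAut.mul_apply, hσ, hσ, Complex.conj_conj]; rfl)
  have h_ne : σ ≠ 1 := by
    rintro rfl
    exact IsTotallyComplex.complexEmbedding_not_isReal φ (RingHom.ext fun x ↦ (hσ φ x).symm)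
  have h_card : Nat.card (Subgroup.zpowers σ) = 2 := by
    rw [Nat.card_zpowers, orderOf_eq_prime h_sq h_ne]
  have : Finite (Subgroup.zpowers σ) := Nat.finite_of_card_ne_zero (by positivity)
  have := Fintype.ofFinite (Subgroup.zpowers σ)
  let L := FixedPoints.subfield (Subgroup.zpowers σ) K
  have hL : IsTotallyReal L := isTotallyReal_iff_le_maximalRealSubfield.mpr fun x hx ψ ↦ by
    have : σ x = x := hx ⟨σ, Subgroup.mem_zpowers σ⟩
    exact (hσ ψ x).symm.trans (congrArg ψ this)
  have : Algebra.IsQuadraticExtension L K := ⟨by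
    rw [FixedPoints.finrank_eq_card, ← Nat.card_eq_fintype_card, h_card]⟩
  exact IsCMField.ofCMExtension L K

variable [IsCMField K]

local notation "K⁺" => maximalRealSubfield K

theorem map_norm_maximalRealSubfield_pos {x : K} (hx : x ≠ 0) (ψ : K⁺ →+* ℝ) :
    0 < ψ (Algebra.norm K⁺ x) := by
  let φ : K →+* ℂ := lift K (Complex.ofRealHom.comp ψ)
  have h : (ψ (Algebra.norm K⁺ x) : ℂ) = Complex.normSq (φ x) := by
    rw [Complex.normSq_eq_conj_mul_self, mul_comm, ← complexEmbedding_complexConj, ← map_mul,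
      ← algebraMap_norm_eq_mul (complexConj_ne_one K), lift_algebraMap_apply]
    rfl
  rw [Complex.ofReal_inj.mp h]
  exact Complex.normSq_pos.mpr ((map_ne_zero φ).mpr hx)

theorem discr_maximalRealSubfield_sq_le : discr K⁺ ^ 2 ≤ |discr K| := by
  have h := natAbs_discr_eq_absNorm_differentIdeal_mul_natAbs_discr_pow K⁺ (𝓞 K⁺) K (𝓞 K)
  rw [Algebra.IsQuadraticExtension.finrank_eq_two K⁺ K] at h
  have h_norm : Ideal.absNorm (differentIdeal (𝓞 K⁺) (𝓞 K)) ≠ 0 := by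
    intro h0
    rw [h0, zero_mul, Int.natAbs_eq_zero] at h
    exact discr_ne_zero K h
  have h_le : (discr K⁺).natAbs ^ 2 ≤ (discr K).natAbs :=
    h ▸ Nat.le_mul_of_pos_left _ (Nat.pos_of_ne_zero h_norm)
  zify at h_le
  rwa [sq_abs] at h_le

theorem isQuadraticExtension_maximalRealSubfield (hK : Module.finrank ℚ K = 4) :
    Algebra.IsQuadraticExtension ℚ K⁺ := by
  have h := Module.finrank_mul_finrank ℚ K⁺ K
  rw [Algebra.IsQuadraticExtension.finrank_eq_two K⁺ K] at h
  exact ⟨by omega⟩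

theorem exists_mem_range_subGal_trace_norm_sq_le (hK : Module.finrank ℚ K = 4) :
    ∃ β ∈ (subGal (complexConj K)).range, β ≠ 0 ∧
      3 * Algebra.trace ℤ (𝓞 K⁺) (RingOfIntegers.norm K⁺ β) ^ 2 * discr K⁺ ≤ 4 * discr K := by
  have := isQuadraticExtension_maximalRealSubfield hK
  have hc := complexConj_ne_one K
  have hF := Algebra.IsQuadraticExtension.finrank_eq_two ℚ K⁺
  let b := Module.finBasisOfFinrankEq ℤ _ ((finrank_range_subGal hc).trans hF)
  have h_discr := discr_mul_discr_range_subGal hc b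
  rw [hF] at h_discr
  obtain ⟨φ⟩ : Nonempty (K →+* ℂ) := inferInstance
  obtain ⟨ψ, -⟩ := exists_ofReal_eq_map_algebraMap (F := K⁺) φ
  have hF_pos : 0 < discr K⁺ := (five_le_discr ψ).trans_lt' (by norm_num)
  have hK_pos : 0 < discr K := discr_pos_of_isTotallyComplex_of_finrank_eq_four hK
  obtain ⟨m, n, hmn, h_le⟩ := exists_int_trace_sq_le_discr (b := fun j ↦ (b j : 𝓞 K))
    (pos_of_mul_pos_right (h_discr ▸ by positivity) hF_pos.le)
  set β := m • b 0 + n • b 1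
  have hβ_ne : β ≠ 0 := by
    intro h0
    have h := Fintype.linearIndependent_iff.mp b.linearIndependent ![m, n]
      ((Fin.sum_univ_two _).trans h0)
    exact hmn.elim (· (h 0)) (· (h 1))
  refine ⟨β, β.2, fun h ↦ hβ_ne (Subtype.ext h), ?_⟩
  have h_trace := trace_int_mul_self_of_mem_range_subGal hc β.2
  change 3 * Algebra.trace ℤ (𝓞 K) ((β : 𝓞 K) * β) ^ 2 ≤ _ at h_le
  rw [h_trace] at h_le
  linarith [mul_le_mul_of_nonneg_right h_le hF_pos.le]

end IsCMField

theorem closure_pair_eq_fieldRange {F K E : Type*} [Field F] [Field K] [Field E]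
    [Algebra ℚ F] [Algebra F K] [Algebra.IsQuadraticExtension ℚ F]
    [Algebra.IsQuadraticExtension F K] (φ : K →+* E) {x : F} (hx : x ∉ (algebraMap ℚ F).range)
    {β : K} (hβ : β ∉ (algebraMap F K).range) :
    Subfield.closure {φ (algebraMap F K x), φ β} = φ.fieldRange := by
  set L := Subfield.closure {φ (algebraMap F K x), φ β}
  have hxL : φ (algebraMap F K x) ∈ L := Subfield.subset_closure (Set.mem_insert _ _)
  have hβL : φ β ∈ L := Subfield.subset_closure (Set.mem_insert_of_mem _ rfl)
  have hF (y : F) : φ (algebraMap F K y) ∈ L := by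
    obtain ⟨a, b, rfl⟩ := exists_eq_algebraMap_add_algebraMap_mul hx y
    simp only [map_add, map_mul, eq_ratCast, map_ratCast]
    exact add_mem (SubfieldClass.ratCast_mem L a) (mul_mem (SubfieldClass.ratCast_mem L b) hxL)
  refine le_antisymm (Subfield.closure_le.mpr ?_) ?_
  · rintro _ (rfl | rfl) <;> exact ⟨_, rfl⟩
  · rintro _ ⟨z, rfl⟩
    obtain ⟨a, b, rfl⟩ := exists_eq_algebraMap_add_algebraMap_mul hβ z
    simp only [map_add, map_mul]
    exact add_mem (hF a) (mul_mem (hF b) hβL)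

/-- The subfield `ℚ(√d, i√y)` of `ℂ`, where `y = (u + v√d) / 2`. For `d` not a square and `y`
totally positive it is the quartic CM-field obtained from `ℚ(√d)` by adjoining a square root of
`-y`; for `y < 0` the real square root is `0` and the field is `ℚ(√d)`. -/
noncomputable def cmSubfield (d u : ℕ) (v : ℤ) : Subfield ℂ :=
  Subfield.closure {(√d : ℂ), Complex.I * √((u + v * √d) / 2)}

section CMSubfield

open NumberField.IsCMField

variable {K : Type*} [Field K] [NumberField K] [IsCMField K]

local notation "K⁺" => maximalRealSubfield K

theorem map_eq_I_mul_sqrt_or_eq_neg {φ : K →+* ℂ} {ψ : K⁺ →+* ℝ} (hψ : ∀ x : K⁺, φ x = ψ x)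
    {β : K} (hβ : complexConj K β = -β) :
    φ β = Complex.I * √(ψ (Algebra.norm K⁺ β)) ∨ φ β = -(Complex.I * √(ψ (Algebra.norm K⁺ β))) := by
  have h_nonneg : 0 ≤ ψ (Algebra.norm K⁺ β) := by
    rcases eq_or_ne β 0 with rfl | h0
    · simp
    · exact (map_norm_maximalRealSubfield_pos h0 ψ).le
  have h_norm : (ψ (Algebra.norm K⁺ β) : ℂ) = -φ β ^ 2 := by
    rw [← hψ, ← map_pow, ← map_neg]
    exact congrArg φ ((algebraMap_norm_eq_mul (complexConj_ne_one K) β).trans (by rw [hβ]; ring))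
  rw [← sq_eq_sq_iff_eq_or_eq_neg, mul_pow, Complex.I_sq, ← Complex.ofReal_pow,
    Real.sq_sqrt h_nonneg, h_norm]
  ring

theorem cmSubfield_eq_fieldRange [Algebra.IsQuadraticExtension ℚ K⁺] {φ : K →+* ℂ} {ψ : K⁺ →+* ℝ}
    (hψ : ∀ x : K⁺, φ x = ψ x) {d u : ℕ} {v : ℤ} {x : K⁺} (hx : ψ x = √d)
    (hx_mem : x ∉ (algebraMap ℚ K⁺).range) {β : K} (hβ : complexConj K β = -β) (hβ_ne : β ≠ 0)
    (huv : 2 * ψ (Algebra.norm K⁺ β) = u + v * √d) :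
    cmSubfield d u v = φ.fieldRange := by
  have hβ_mem : β ∉ (algebraMap K⁺ K).range := by
    rintro ⟨y, rfl⟩
    rw [AlgEquiv.commutes, self_eq_neg] at hβ
    exact hβ_ne hβ
  have hy : (u + v * √d) / 2 = ψ (Algebra.norm K⁺ β) := by linarith
  have hφx : φ (algebraMap K⁺ K x) = (√d : ℂ) := (hψ x).trans (by rw [hx])
  rw [cmSubfield, hy]
  rcases map_eq_I_mul_sqrt_or_eq_neg hψ hβ with h | h
  · rw [← h, ← hφx, closure_pair_eq_fieldRange φ hx_mem hβ_mem]
  · have hβ_mem' : -β ∉ (algebraMap K⁺ K).range := fun h' ↦ hβ_mem (neg_mem_iff.mp h')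
    rw [← neg_eq_iff_eq_neg.mpr h, ← map_neg, ← hφx, closure_pair_eq_fieldRange φ hx_mem hβ_mem']

theorem exists_cmSubfield_eq_fieldRange (hK : Module.finrank ℚ K = 4) (φ : K →+* ℂ) :
    ∃ (d u : ℕ) (v : ℤ), cmSubfield d u v = φ.fieldRange ∧
      (5 ≤ d ∧ (d % 4 = 0 ∨ d % 4 = 1) ∧ (d ^ 2 : ℤ) ≤ |discr K|) ∧
      (1 ≤ u ∧ (3 * u ^ 2 * d : ℤ) ≤ 4 * |discr K|) ∧ v ^ 2 * d ≤ u ^ 2 := by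
  have := isQuadraticExtension_maximalRealSubfield hK
  obtain ⟨ψ, hψ⟩ := exists_ofReal_eq_map_algebraMap (F := K⁺) φ
  obtain ⟨τ, hτ⟩ := exists_gal_ne_one ℚ K⁺
  obtain ⟨x, hx, hτx, -⟩ := exists_map_eq_sqrt_discr hτ ψ
  obtain ⟨β, hβ, hβ_ne, h_short⟩ := exists_mem_range_subGal_trace_norm_sq_le hK
  obtain ⟨v, hv, hv_sq, hu⟩ := exists_int_two_mul_map_eq_of_totallyPositive ψ
    (y := RingOfIntegers.norm K⁺ β)
    (map_norm_maximalRealSubfield_pos (RingOfIntegers.coe_ne_zero_iff.mpr hβ_ne))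
  have hd := five_le_discr ψ
  have hd_mod := discr_emod_four K⁺
  have hd_sq := discr_maximalRealSubfield_sq_le (K := K)
  generalize Algebra.trace ℤ (𝓞 K⁺) (RingOfIntegers.norm K⁺ β) = u at *
  generalize discr K⁺ = d at *
  lift d to ℕ using by omega
  lift u to ℕ using hu.le
  refine ⟨d, u, v, ?_, ⟨by omega, by omega, hd_sq⟩,
    ⟨by omega, h_short.trans (by gcongr; exact le_abs_self _)⟩, hv_sq⟩
  have hx_mem : x ∉ (algebraMap ℚ K⁺).range := by
    rintro ⟨q, rfl⟩
    rw [AlgEquiv.commutes, self_eq_neg] at hτx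
    rw [hτx, map_zero, eq_comm, Real.sqrt_eq_zero (by positivity)] at hx
    norm_cast at hx
    omega
  exact cmSubfield_eq_fieldRange hψ hx hx_mem
    (gal_apply_of_mem_range_subGal (complexConj_ne_one K) hβ)
    (RingOfIntegers.coe_ne_zero_iff.mpr hβ_ne) hv

end CMSubfield

section Counting

theorem sum_Icc_one_div_sqrt_le (N : ℕ) : ∑ d ∈ Finset.Icc 1 N, 1 / √(d : ℝ) ≤ 2 * √N := by
  induction N with
  | zero => simp
  | succ n ih =>
    have hb : 0 < √((n + 1 : ℕ) : ℝ) := by positivity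
    have ha_sq : √(n : ℝ) ^ 2 = n := Real.sq_sqrt (by positivity)
    have hb_sq : √((n + 1 : ℕ) : ℝ) ^ 2 = n + 1 := by
      rw [Real.sq_sqrt (by positivity), Nat.cast_succ]
    have h : 1 / √((n + 1 : ℕ) : ℝ) ≤ 2 * √((n + 1 : ℕ) : ℝ) - 2 * √n := by
      rw [div_le_iff₀ hb]
      linarith [sq_nonneg (√(n : ℝ) - √((n + 1 : ℕ) : ℝ))]
    rw [Finset.sum_Icc_succ_top (by omega)]
    linarith

theorem one_div_add_one_mul_sqrt_le {x : ℝ} (hx : 0 < x) :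
    1 / ((x + 1) * √(x + 1)) ≤ 2 / √x - 2 / √(x + 1) := by
  have : 0 < √x := Real.sqrt_pos.mpr hx
  have : 0 < √(x + 1) := by positivity
  have hab : √x ≤ √(x + 1) := Real.sqrt_le_sqrt (by linarith)
  have hb_sq : √(x + 1) ^ 2 = x + 1 := Real.sq_sqrt (by positivity)
  have h_conj : (√(x + 1) - √x) * (√(x + 1) + √x) = 1 := by
    linear_combination hb_sq - Real.sq_sqrt hx.le
  calc 1 / ((x + 1) * √(x + 1))
      = 2 * (1 / (2 * √(x + 1) * (√(x + 1) * √(x + 1)))) := by rw [← sq, hb_sq]; field_simp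
    _ ≤ 2 * (1 / ((√(x + 1) + √x) * (√x * √(x + 1)))) := by gcongr; linarith
    _ = 2 / √x - 2 / √(x + 1) := by field_simp; linear_combination - h_conj

theorem one_div_mul_sqrt_le_of_four_mul_le {x y : ℝ} (hx : 0 < x) (hxy : 4 * x ≤ y) :
    1 / (y * √y) ≤ 1 / 8 * (1 / (x * √x)) := by
  have hy : 0 < y := by linarith
  have h4 : √(4 * x) = 2 * √x := by
    rw [Real.sqrt_mul (by norm_num), show (4 : ℝ) = 2 ^ 2 by norm_num, Real.sqrt_sq (by norm_num)]
  calc 1 / (y * √y) ≤ 1 / (4 * x * √(4 * x)) := by gcongr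
    _ = 1 / 8 * (1 / (x * √x)) := by rw [h4]; field_simp; norm_num

theorem sum_filter_Icc_five_mod_four_succ {M : Type*} [AddCommMonoid M] (f : ℕ → M) {n : ℕ}
    (hn : 1 ≤ n) :
    ∑ d ∈ Finset.Icc 5 (4 * (n + 1) + 3) with d % 4 = 0 ∨ d % 4 = 1, f d
      = ∑ d ∈ Finset.Icc 5 (4 * n + 3) with d % 4 = 0 ∨ d % 4 = 1, f d
        + f (4 * (n + 1)) + f (4 * (n + 1) + 1) := by
  rw [Finset.sum_filter, show 4 * (n + 1) + 3 = 4 * n + 3 + 1 + 1 + 1 + 1 by ring,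
    Finset.sum_Icc_succ_top (by omega), Finset.sum_Icc_succ_top (by omega),
    Finset.sum_Icc_succ_top (by omega), Finset.sum_Icc_succ_top (by omega),
    if_pos (by omega), if_pos (by omega), if_neg (by omega), if_neg (by omega), add_zero,
    add_zero, Finset.sum_filter]
  rfl

theorem sum_filter_one_div_mul_sqrt_le {n : ℕ} (hn : 1 ≤ n) :
    ∑ d ∈ Finset.Icc 5 (4 * n + 3) with d % 4 = 0 ∨ d % 4 = 1, 1 / ((d : ℝ) * √d)
      ≤ 3 / 5 - 1 / (2 * √n) := by
  induction n, hn using Nat.le_induction with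
  | base =>
    have h5 : (2 : ℝ) ≤ √5 := Real.le_sqrt_of_sq_le (by norm_num)
    have h : 1 / (5 * √5) ≤ (1 : ℝ) / (5 * 2) := by gcongr
    norm_num [Finset.sum_filter, Finset.sum_Icc_succ_top] at h ⊢
    exact h
  | succ n hn ih =>
    have h_tail := one_div_add_one_mul_sqrt_le (x := n) (by positivity)
    have h₀ := one_div_mul_sqrt_le_of_four_mul_le (x := n + 1) (y := (4 * (n + 1) : ℕ))
      (by positivity) (by push_cast; rfl)
    have h₁ := one_div_mul_sqrt_le_of_four_mul_le (x := n + 1) (y := (4 * (n + 1) + 1 : ℕ))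
      (by positivity) (by push_cast; linarith)
    have h_cast : ((n + 1 : ℕ) : ℝ) = n + 1 := Nat.cast_succ n
    have h_half (t : ℝ) : 1 / (2 * t) = 1 / 4 * (2 / t) := by ring
    rw [h_half] at ih
    rw [sum_filter_Icc_five_mod_four_succ _ hn, h_half, h_cast]
    linarith

theorem sum_Icc_one_two_mul_div_add_one (U : ℕ) (s : ℝ) :
    ∑ u ∈ Finset.Icc 1 U, (2 * u / s + 1) = U ^ 2 / s + U / s + U := by
  induction U with
  | zero => simp
  | succ n ih =>
    rw [Finset.sum_Icc_succ_top (by omega), ih]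
    push_cast
    ring

/-- The triples `(d, u, v)` with `d ≡ 0, 1 [MOD 4]`, `5 ≤ d ≤ √B`, `1 ≤ u`, `3u²d ≤ 4B` and
`v²d ≤ u²`. Every quartic CM-subfield of `ℂ` with discriminant at most `B` is `cmSubfield d u v`
for at least one of them, but not every such field has discriminant at most `B`. -/
noncomputable def cmParams (B : ℕ) : Finset (Σ _ : ℕ, Σ _ : ℕ, ℤ) :=
  {d ∈ Finset.Icc 5 (Nat.sqrt B) | d % 4 = 0 ∨ d % 4 = 1}.sigma fun d ↦
    (Finset.Icc 1 (Nat.sqrt (4 * B / (3 * d)))).sigma fun u ↦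
      Finset.Icc (-(Nat.sqrt (u ^ 2 / d) : ℤ)) (Nat.sqrt (u ^ 2 / d))

theorem mem_cmParams {B d u : ℕ} {v : ℤ} :
    ⟨d, u, v⟩ ∈ cmParams B ↔ (5 ≤ d ∧ (d % 4 = 0 ∨ d % 4 = 1) ∧ d ^ 2 ≤ B) ∧
      (1 ≤ u ∧ 3 * u ^ 2 * d ≤ 4 * B) ∧ v ^ 2 * d ≤ u ^ 2 := by
  rcases Nat.eq_zero_or_pos d with rfl | hd
  · simp [cmParams]
  have hu : u ≤ Nat.sqrt (4 * B / (3 * d)) ↔ 3 * u ^ 2 * d ≤ 4 * B := by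
    rw [Nat.le_sqrt', Nat.le_div_iff_mul_le (by positivity),
      show u ^ 2 * (3 * d) = 3 * u ^ 2 * d by ring]
  have hv : -(Nat.sqrt (u ^ 2 / d) : ℤ) ≤ v ∧ v ≤ Nat.sqrt (u ^ 2 / d) ↔ v ^ 2 * d ≤ u ^ 2 := by
    rw [← abs_le, Int.abs_eq_natAbs, Nat.cast_le, Nat.le_sqrt', Nat.le_div_iff_mul_le hd]
    zify
    rw [sq_abs]
  simp only [cmParams, Finset.mem_sigma, Finset.mem_filter, Finset.mem_Icc, hu, hv, Nat.le_sqrt']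
  tauto

theorem card_Icc_neg_sqrt_div_le (u d : ℕ) :
    ((Finset.Icc (-(Nat.sqrt (u ^ 2 / d) : ℤ)) (Nat.sqrt (u ^ 2 / d))).card : ℝ)
      ≤ 2 * u / √d + 1 := by
  have h_sqrt : (Nat.sqrt (u ^ 2 / d) : ℝ) ≤ u / √d := by
    calc (Nat.sqrt (u ^ 2 / d) : ℝ) ≤ √(u ^ 2 / d : ℕ) := Real.nat_sqrt_le_real_sqrt
      _ ≤ √((u : ℝ) ^ 2 / d) := Real.sqrt_le_sqrt (by exact_mod_cast Nat.cast_div_le)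
      _ = u / √d := by rw [Real.sqrt_div (by positivity), Real.sqrt_sq (by positivity)]
  rw [Int.card_Icc, show ((Nat.sqrt (u ^ 2 / d) : ℤ) + 1 - -(Nat.sqrt (u ^ 2 / d) : ℤ)).toNat
    = 2 * Nat.sqrt (u ^ 2 / d) + 1 by omega, mul_div_assoc]
  push_cast
  linarith

theorem sum_card_Icc_neg_sqrt_div_le (B : ℕ) {d : ℕ} (hd : 1 ≤ d) :
    ∑ u ∈ Finset.Icc 1 (Nat.sqrt (4 * B / (3 * d))),
        ((Finset.Icc (-(Nat.sqrt (u ^ 2 / d) : ℤ)) (Nat.sqrt (u ^ 2 / d))).card : ℝ)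
      ≤ 4 / 3 * B * (1 / (d * √d)) + 3 * √B * (1 / √d) := by
  set U := Nat.sqrt (4 * B / (3 * d))
  have hs : 1 ≤ √(d : ℝ) := Real.one_le_sqrt.mpr (by exact_mod_cast hd)
  have hU_sq : (U : ℝ) ^ 2 ≤ 4 / 3 * (B / d) := by
    calc (U : ℝ) ^ 2 ≤ (4 * B / (3 * d) : ℕ) := by exact_mod_cast Nat.sqrt_le' _
      _ ≤ (4 * B : ℕ) / (3 * d : ℕ) := Nat.cast_div_le
      _ = 4 / 3 * (B / d) := by push_cast; field_simp
  have hU : (U : ℝ) ≤ 3 / 2 * √B * (1 / √d) := by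
    refine le_of_sq_le_sq (hU_sq.trans ?_) (by positivity)
    calc 4 / 3 * ((B : ℝ) / d) ≤ (3 / 2) ^ 2 * (B / d) := by gcongr; norm_num
      _ = (3 / 2 * √B * (1 / √d)) ^ 2 := by
        rw [mul_pow, mul_pow, div_pow 1, Real.sq_sqrt (by positivity),
          Real.sq_sqrt (by positivity)]
        ring
  calc _ ≤ ∑ u ∈ Finset.Icc 1 U, (2 * u / √(d : ℝ) + 1) :=
        Finset.sum_le_sum fun u _ ↦ card_Icc_neg_sqrt_div_le u d
    _ = (U : ℝ) ^ 2 / √d + U / √d + U := sum_Icc_one_two_mul_div_add_one U _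
    _ ≤ 4 / 3 * (B / d) / √d + U + U := by
        gcongr
        exact div_le_self (by positivity) hs
    _ = 4 / 3 * B * (1 / (d * √d)) + 2 * U := by field_simp; ring
    _ ≤ 4 / 3 * B * (1 / (d * √d)) + 3 * √B * (1 / √d) := by linarith

theorem card_cmParams_le {B : ℕ} (hB : 10 ^ 6 ≤ B) : (cmParams B).card ≤ B := by
  set D := {d ∈ Finset.Icc 5 (Nat.sqrt B) | d % 4 = 0 ∨ d % 4 = 1}
  have hD {d : ℕ} (hd : d ∈ D) : 5 ≤ d ∧ d ≤ Nat.sqrt B :=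
    Finset.mem_Icc.mp (Finset.mem_filter.mp hd).1
  have h_main : ∑ d ∈ D, 1 / ((d : ℝ) * √d) ≤ 3 / 5 := by
    have hs : 1 ≤ Nat.sqrt B := Nat.sqrt_pos.mpr (by omega)
    have h_sub : D ⊆ {d ∈ Finset.Icc 5 (4 * Nat.sqrt B + 3) | d % 4 = 0 ∨ d % 4 = 1} :=
      Finset.filter_subset_filter _ (Finset.Icc_subset_Icc_right (by omega))
    exact (Finset.sum_le_sum_of_subset_of_nonneg h_sub fun _ _ _ ↦ by positivity).trans
      ((sum_filter_one_div_mul_sqrt_le hs).trans (sub_le_self _ (by positivity)))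
  have h_error : ∑ d ∈ D, 1 / √(d : ℝ) ≤ 2 * √√B := by
    have h_sub : D ⊆ Finset.Icc 1 (Nat.sqrt B) := fun d hd ↦
      Finset.mem_Icc.mpr ⟨(hD hd).1.trans' (by norm_num), (hD hd).2⟩
    refine (Finset.sum_le_sum_of_subset_of_nonneg h_sub fun _ _ _ ↦ by positivity).trans
      ((sum_Icc_one_div_sqrt_le _).trans ?_)
    gcongr
    exact Real.nat_sqrt_le_real_sqrt
  have h_large : 30 * √B * √√B ≤ B := by
    have hb : 30 ≤ √√(B : ℝ) := by
      refine Real.le_sqrt_of_sq_le (Real.le_sqrt_of_sq_le ?_)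
      have : (10 ^ 6 : ℝ) ≤ B := by exact_mod_cast hB
      linarith
    calc 30 * √B * √√B ≤ √√(B : ℝ) * √B * √√B := by gcongr
      _ = √B * √B := by rw [mul_right_comm, Real.mul_self_sqrt (Real.sqrt_nonneg _)]
      _ = B := Real.mul_self_sqrt (by positivity)
  rw [← Nat.cast_le (α := ℝ)]
  calc ((cmParams B).card : ℝ)
      ≤ ∑ d ∈ D, (4 / 3 * B * (1 / (d * √d)) + 3 * √B * (1 / √d)) := by
        simp only [cmParams, Finset.card_sigma, Nat.cast_sum]
        exact Finset.sum_le_sum fun d hd ↦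
          sum_card_Icc_neg_sqrt_div_le B ((hD hd).1.trans' (by norm_num))
    _ = 4 / 3 * B * ∑ d ∈ D, 1 / ((d : ℝ) * √d) + 3 * √B * ∑ d ∈ D, 1 / √(d : ℝ) := by
        rw [Finset.sum_add_distrib, Finset.mul_sum, Finset.mul_sum]
    _ ≤ 4 / 3 * B * (3 / 5) + 3 * √B * (2 * √√B) := by gcongr
    _ ≤ B := by linarith

end Counting

theorem exists_mem_cmParams_cmSubfield_eq {B : ℕ} {K : Subfield ℂ} [NumberField K] [IsCMField K]
    (hK : Module.finrank ℚ K = 4) (hB : |discr K| ≤ B) :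
    ∃ t ∈ cmParams B, cmSubfield t.1 t.2.1 t.2.2 = K := by
  obtain ⟨d, u, v, h_eq, ⟨hd, hd_mod, hd_sq⟩, ⟨hu, hu_sq⟩, hv⟩ :=
    exists_cmSubfield_eq_fieldRange hK K.subtype
  have hd_sq_le : (d ^ 2 : ℤ) ≤ B := hd_sq.trans hB
  have hu_sq_le : (3 * u ^ 2 * d : ℤ) ≤ 4 * B := hu_sq.trans (by gcongr)
  refine ⟨⟨d, u, v⟩, mem_cmParams.mpr ⟨⟨hd, hd_mod, ?_⟩, ⟨hu, ?_⟩, hv⟩, ?_⟩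
  · exact_mod_cast hd_sq_le
  · exact_mod_cast hu_sq_le
  · rw [h_eq, Subfield.fieldRange_subtype]

theorem stmt11_general {B : ℕ} (hB : 10 ^ 6 ≤ B) {S : Set (Subfield ℂ)}
    (hS : ∀ K ∈ S, ∃ hNF : NumberField K,
      Module.finrank ℚ K = 4 ∧
      (∀ φ : K →+* ℂ, ¬ ComplexEmbedding.IsReal φ) ∧
      (∃ σ : K ≃+* K, ∀ (φ : K →+* ℂ) (x : K), φ (σ x) = (starRingEnd ℂ) (φ x)) ∧
      |@NumberField.discr K _ hNF| ≤ (B : ℤ)) :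
    S.Finite ∧ S.ncard ≤ B := by
  classical
  let T := (cmParams B).image fun t ↦ cmSubfield t.1 t.2.1 t.2.2
  have hST : S ⊆ T := by
    intro K hKS
    obtain ⟨hNF, hK, h_complex, ⟨σ, hσ⟩, h_discr⟩ := hS K hKS
    have : IsTotallyComplex K := ⟨fun w ↦ by
      rw [← InfinitePlace.not_isReal_iff_isComplex, InfinitePlace.isReal_iff]
      exact h_complex w.embedding⟩
    have : IsCMField K := isCMField_of_forall_apply_eq_conj hσ
    exact Finset.mem_image.mpr (exists_mem_cmParams_cmSubfield_eq hK h_discr)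
  refine ⟨T.finite_toSet.subset hST, ?_⟩
  calc S.ncard ≤ (T : Set (Subfield ℂ)).ncard := Set.ncard_le_ncard hST
    _ = T.card := Set.ncard_coe_finset T
    _ ≤ (cmParams B).card := Finset.card_image_le
    _ ≤ B := card_cmParams_le hB

/-- Proposition 4.5: there is `B₀ > 0` such that for every `B ≥ B₀`, any
collection of pairwise non-isomorphic quartic CM-subfields of `ℂ` with absolute discriminant
at most `B` has at most `B` elements. -/
theorem stmt11 :
    ∃ B₀ : ℕ, 0 < B₀ ∧ ∀ B : ℕ, B₀ ≤ B → ∀ S : Set (Subfield ℂ),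
      (∀ K ∈ S, ∃ hNF : NumberField K,
        Module.finrank ℚ K = 4 ∧
        (∀ φ : K →+* ℂ, ¬ ComplexEmbedding.IsReal φ) ∧
        (∃ σ : K ≃+* K, ∀ (φ : K →+* ℂ) (x : K), φ (σ x) = (starRingEnd ℂ) (φ x)) ∧
        |@NumberField.discr K _ hNF| ≤ (B : ℤ)) →
      (∀ K ∈ S, ∀ L ∈ S, K ≠ L → IsEmpty (K ≃+* L)) →
      S.Finite ∧ S.ncard ≤ B :=
  ⟨10 ^ 6, by norm_num, fun _ hB _ hS _ ↦ stmt11_general hB hS⟩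
end

section
/- Let k be a field of characteristic neither 2 nor 3, and let a, b, c, d ∈ k satisfy 12ac + 16bd = 1. Set Δ₁ = a³ + b² and Δ₂ = c³ + d². Then the cubic polynomial f₁ = x³ + 12(2a²d - bc)x² + 12(16ad² + 3c²)Δ₁·x + 512·Δ₁²·d³ has discriminant -2²·3³·Δ₁²·Δ₂, and the cubic polynomial f₂ = x³ + 12(2bc² - ad)x² + 12(16b²c + 3a²)Δ₂·x + 512·Δ₂²·b³ has discriminant -2²·3³·Δ₁·Δ₂². -/
/-!
Substituting `x = Δ₁ y` in `f₁` and dividing by `Δ₁²` gives the cubic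
`g = Δ₁ y³ + 12 (2a²d - bc) y² + 12 (16ad² + 3c²) y + 512 d³ = (ay + 8d)³ + y (by - 6c)²`.
Put `L = ay + 8d` and `N = 2by - 12c`. The relation `12ac + 16bd = 1` gives `y = 4 (3c L + 2d N)`,
so that `g = L³ + 3c L N² + 2d N³`. Homogenized, `(L, N)` is a linear substitution of determinant
`-(12ac + 16bd) = -1`, hence `g` has the same discriminant as `z³ + 3cz + 2d`, which is
`-108 (c³ + d²)`. Exchanging `(a, b)` with `(c, d)` turns `f₁` into `f₂`.
-/

section CommRing

variable {R : Type*} [CommRing R]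

theorem cubic_discr_of_monic (p q r : R) :
    (⟨1, p, q, r⟩ : Cubic R).discr =
      18 * p * q * r - 4 * p ^ 3 * r + p ^ 2 * q ^ 2 - 4 * q ^ 3 - 27 * r ^ 2 := by
  simp only [Cubic.discr]
  ring

theorem cubic_discr_of_depressed (q r : R) :
    (⟨1, 0, q, r⟩ : Cubic R).discr = -4 * q ^ 3 - 27 * r ^ 2 := by
  rw [cubic_discr_of_monic]
  ring

theorem cubic_discr_monicize (t p q r : R) :
    (⟨1, p, q * t, r * t ^ 2⟩ : Cubic R).discr = t ^ 2 * (⟨t, p, q, r⟩ : Cubic R).discr := by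
  simp only [Cubic.discr]
  ring

/-- The action of `2 × 2` matrices on binary cubic forms by linear substitution, under which the
discriminant is a relative invariant. The cubic `P` stands for the form
`P.a X³ + P.b X² Y + P.c X Y² + P.d Y³`, and the result for this form evaluated at
`(M 0 0 X + M 0 1 Y, M 1 0 X + M 1 1 Y)`. -/
def cubicSubst (P : Cubic R) (M : Matrix (Fin 2) (Fin 2) R) : Cubic R where
  a := P.a * M 0 0 ^ 3 + P.b * M 0 0 ^ 2 * M 1 0 + P.c * M 0 0 * M 1 0 ^ 2 + P.d * M 1 0 ^ 3
  b := 3 * P.a * M 0 0 ^ 2 * M 0 1 + P.b * (M 0 0 ^ 2 * M 1 1 + 2 * M 0 0 * M 0 1 * M 1 0) +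
    P.c * (M 0 1 * M 1 0 ^ 2 + 2 * M 0 0 * M 1 0 * M 1 1) + 3 * P.d * M 1 0 ^ 2 * M 1 1
  c := 3 * P.a * M 0 0 * M 0 1 ^ 2 + P.b * (M 0 1 ^ 2 * M 1 0 + 2 * M 0 0 * M 0 1 * M 1 1) +
    P.c * (M 0 0 * M 1 1 ^ 2 + 2 * M 0 1 * M 1 0 * M 1 1) + 3 * P.d * M 1 0 * M 1 1 ^ 2
  d := P.a * M 0 1 ^ 3 + P.b * M 0 1 ^ 2 * M 1 1 + P.c * M 0 1 * M 1 1 ^ 2 + P.d * M 1 1 ^ 3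

theorem discr_cubicSubst (P : Cubic R) (M : Matrix (Fin 2) (Fin 2) R) :
    (cubicSubst P M).discr = M.det ^ 6 * P.discr := by
  simp only [Cubic.discr, cubicSubst, Matrix.det_fin_two]
  ring

/-- The cubic `f₁` of the parameters `(a, b, c, d)`, as a coefficient tuple; the cubic `f₂` is
`coverCubic c d a b`. -/
def coverCubic (a b c d : R) : Cubic R :=
  ⟨1, 12 * (2 * a ^ 2 * d - b * c), 12 * (16 * a * d ^ 2 + 3 * c ^ 2) * (a ^ 3 + b ^ 2),
    512 * (a ^ 3 + b ^ 2) ^ 2 * d ^ 3⟩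

/-- The cubic `g y = f₁ (Δ₁ y) / Δ₁²`, where `f₁` is `coverCubic a b c d` and `Δ₁ = a³ + b²`, with
the division carried out on the coefficients so that `Δ₁` may vanish. -/
def rescaledCoverCubic (a b c d : R) : Cubic R :=
  ⟨a ^ 3 + b ^ 2, 12 * (2 * a ^ 2 * d - b * c), 12 * (16 * a * d ^ 2 + 3 * c ^ 2), 512 * d ^ 3⟩

theorem discr_coverCubic_eq_sq_mul (a b c d : R) :
    (coverCubic a b c d).discr = (a ^ 3 + b ^ 2) ^ 2 * (rescaledCoverCubic a b c d).discr := by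
  rw [coverCubic, mul_right_comm 512, cubic_discr_monicize, rescaledCoverCubic]

theorem cubicSubst_depressed_eq_rescaledCoverCubic {a b c d : R}
    (h : 12 * a * c + 16 * b * d = 1) :
    cubicSubst ⟨1, 0, 3 * c, 2 * d⟩ !![a, 8 * d; 2 * b, -(12 * c)] =
      rescaledCoverCubic a b c d := by
  simp only [cubicSubst, rescaledCoverCubic, Matrix.of_apply, Matrix.cons_val',
    Matrix.cons_val_zero, Matrix.cons_val_one, Matrix.cons_val_fin_one, Cubic.mk.injEq]
  refine ⟨?_, ?_, ?_, ?_⟩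
  · linear_combination b ^ 2 * h
  · linear_combination -12 * b * c * h
  · linear_combination 36 * c ^ 2 * h
  · ring

theorem discr_rescaledCoverCubic {a b c d : R} (h : 12 * a * c + 16 * b * d = 1) :
    (rescaledCoverCubic a b c d).discr = -(2 ^ 2 * 3 ^ 3) * (c ^ 3 + d ^ 2) := by
  have det_eq : (!![a, 8 * d; 2 * b, -(12 * c)]).det = -1 := by
    rw [Matrix.det_fin_two_of]
    linear_combination -h
  rw [← cubicSubst_depressed_eq_rescaledCoverCubic h, discr_cubicSubst, det_eq,
    cubic_discr_of_depressed]
  ring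

theorem discr_coverCubic {a b c d : R} (h : 12 * a * c + 16 * b * d = 1) :
    (coverCubic a b c d).discr =
      -(2 ^ 2 * 3 ^ 3) * (a ^ 3 + b ^ 2) ^ 2 * (c ^ 3 + d ^ 2) := by
  rw [discr_coverCubic_eq_sq_mul, discr_rescaledCoverCubic h]
  ring

theorem stmt12_general (a b c d : R) (habcd : 12 * a * c + 16 * b * d = 1) :
    let Δ₁ := a ^ 3 + b ^ 2
    let Δ₂ := c ^ 3 + d ^ 2
    let f₁ : Cubic R := ⟨1, 12 * (2 * a ^ 2 * d - b * c),
      12 * (16 * a * d ^ 2 + 3 * c ^ 2) * Δ₁, 512 * Δ₁ ^ 2 * d ^ 3⟩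
    let f₂ : Cubic R := ⟨1, 12 * (2 * b * c ^ 2 - a * d),
      12 * (16 * b ^ 2 * c + 3 * a ^ 2) * Δ₂, 512 * Δ₂ ^ 2 * b ^ 3⟩
    f₁.discr = -(2 ^ 2 * 3 ^ 3) * Δ₁ ^ 2 * Δ₂ ∧ f₂.discr = -(2 ^ 2 * 3 ^ 3) * Δ₁ * Δ₂ ^ 2 := by
  intro Δ₁ Δ₂ f₁ f₂
  have swapped : 12 * c * a + 16 * d * b = 1 := by linear_combination habcd
  have f₂_eq : f₂ = coverCubic c d a b := by
    simp only [f₂, Δ₂, coverCubic, Cubic.mk.injEq, true_and, and_true]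
    constructor <;> ring
  refine ⟨discr_coverCubic habcd, ?_⟩
  rw [f₂_eq, discr_coverCubic swapped]
  exact mul_right_comm _ _ _

end CommRing

/-- discriminant computation of Lemma A.1: over a field of characteristic
neither `2` nor `3`, with `12ac + 16bd = 1`, `Δ₁ = a³ + b²`, `Δ₂ = c³ + d²`, the monic cubic
`f₁ = x³ + 12(2a²d - bc)x² + 12(16ad² + 3c²)Δ₁ x + 512Δ₁²d³` has discriminant
`-2²·3³·Δ₁²·Δ₂`, and `f₂ = x³ + 12(2bc² - ad)x² + 12(16b²c + 3a²)Δ₂ x + 512Δ₂²b³` has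
discriminant `-2²·3³·Δ₁·Δ₂²`, where the discriminant of `x³ + px² + qx + r` is
`18pqr - 4p³r + p²q² - 4q³ - 27r²`. -/
theorem stmt12 (k : Type*) [Field k] (h2 : (2 : k) ≠ 0) (h3 : (3 : k) ≠ 0)
    (a b c d : k) (habcd : 12 * a * c + 16 * b * d = 1) :
    (let Δ₁ := a ^ 3 + b ^ 2
     let Δ₂ := c ^ 3 + d ^ 2
     let p₁ := 12 * (2 * a ^ 2 * d - b * c)
     let q₁ := 12 * (16 * a * d ^ 2 + 3 * c ^ 2) * Δ₁
     let r₁ := 512 * Δ₁ ^ 2 * d ^ 3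
     let p₂ := 12 * (2 * b * c ^ 2 - a * d)
     let q₂ := 12 * (16 * b ^ 2 * c + 3 * a ^ 2) * Δ₂
     let r₂ := 512 * Δ₂ ^ 2 * b ^ 3
     18 * p₁ * q₁ * r₁ - 4 * p₁ ^ 3 * r₁ + p₁ ^ 2 * q₁ ^ 2 - 4 * q₁ ^ 3 - 27 * r₁ ^ 2
        = -(2 ^ 2 * 3 ^ 3) * Δ₁ ^ 2 * Δ₂ ∧
     18 * p₂ * q₂ * r₂ - 4 * p₂ ^ 3 * r₂ + p₂ ^ 2 * q₂ ^ 2 - 4 * q₂ ^ 3 - 27 * r₂ ^ 2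
        = -(2 ^ 2 * 3 ^ 3) * Δ₁ * Δ₂ ^ 2) := by
  simpa only [cubic_discr_of_monic] using stmt12_general a b c d habcd
end

section
/- Let k be a field of characteristic neither 2 nor 3, and let a, b, c, d, t ∈ k satisfy 12ac + 16bd = 1, Δ₁ := a³ + b² ≠ 0, Δ₂ := c³ + d² ≠ 0, and t ≠ 0. Define f = (x³ + 3ax + 2b)(2dx³ + 3cx² + 1) and f₁ = X³ + 12(2a²d - bc)X² + 12(16ad² + 3c²)Δ₁·X + 512·Δ₁²·d³. Then for all x, y ∈ k with t·y² = f(x) and x³ + 3ax + 2b ≠ 0, setting u₁ = 12Δ₁·(-2dx + c)/(x³ + 3ax + 2b) and v₁ = Δ₁·(16dx³ - 12cx² - 1)/(x³ + 3ax + 2b)², one has t·(y·v₁)² = f₁(u₁). -/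
/-!
Write `P = x³ + 3ax + 2b` and `L = c - 2dx`. The fibre of the degree-3 map `x ↦ L / P` over `λ` is
the zero set of `λ P(T) - L(T) = λ T³ + (3aλ + 2d) T + (2bλ - c)`, a cubic without `T²` term whose
discriminant is `-λ B(λ)` with `B(λ) = 4 (3aλ + 2d)³ + 27 λ (2bλ - c)²`. The right-hand side of the
elliptic curve is `16 Δ₁² B(λ)` at `X = 12 Δ₁ λ`. When `λ = L(x) / P(x)`, dividing `T - x` out of
the fibre cubic factors the discriminant: the derivative of that cubic at `x` enters squared and
is, up to a factor `-4 P(x)`, the ramification polynomial `16dx³ - 12cx² - 1`, while the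
discriminant of the residual quadratic gives the second factor `2dx³ + 3cx² + 1` of the sextic.
-/

section CommRing

variable {R : Type*} [CommRing R]

theorem four_mul_cube_add_eq_of_cubic_root {p q r x : R} (hx : p * x ^ 3 + q * x + r = 0) :
    4 * q ^ 3 + 27 * p * r ^ 2 = (3 * p * x ^ 2 + 4 * q) * (3 * p * x ^ 2 + q) ^ 2 := by
  obtain rfl : r = -(p * x ^ 3 + q * x) := eq_neg_of_add_eq_zero_right hx
  ring

/-- The binary cubic form that cuts out, away from `[0 : 1]`, the branch points `[X : Z]` of the
degree-3 map `x ↦ [c - 2dx : x³ + 3ax + 2b]` from the projective line to itself. It is the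
discriminant of the fibre cubic `X T³ + (3aX + 2dZ) T + (2bX - cZ)`, divided by `-X`. -/
def branchForm (a b c d X Z : R) : R :=
  4 * (3 * a * X + 2 * d * Z) ^ 3 + 27 * X * (2 * b * X - c * Z) ^ 2

theorem sixteen_mul_branchForm_eq_mul_sq (a b c d x : R) :
    16 * branchForm a b c d (-(2 * d * x) + c) (x ^ 3 + 3 * a * x + 2 * b) =
      (2 * d * x ^ 3 + 3 * c * x ^ 2 + (12 * a * c + 16 * b * d)) *
        (16 * d * x ^ 3 - 12 * c * x ^ 2 - (12 * a * c + 16 * b * d)) ^ 2 := by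
  set L := -(2 * d * x) + c with hL
  set P := x ^ 3 + 3 * a * x + 2 * b with hP
  have x_mem_fibre : L * x ^ 3 + (3 * a * L + 2 * d * P) * x + (2 * b * L - c * P) = 0 := by
    rw [hL, hP]
    ring
  have residual_discr : 3 * L * x ^ 2 + 4 * (3 * a * L + 2 * d * P) =
      2 * d * x ^ 3 + 3 * c * x ^ 2 + (12 * a * c + 16 * b * d) := by
    rw [hL, hP]
    ring
  have four_mul_derivative : 4 * (3 * L * x ^ 2 + (3 * a * L + 2 * d * P)) =
      -(16 * d * x ^ 3 - 12 * c * x ^ 2 - (12 * a * c + 16 * b * d)) := by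
    rw [hL, hP]
    ring
  calc 16 * branchForm a b c d L P
      = (3 * L * x ^ 2 + 4 * (3 * a * L + 2 * d * P)) *
          (4 * (3 * L * x ^ 2 + (3 * a * L + 2 * d * P))) ^ 2 := by
        rw [branchForm, four_mul_cube_add_eq_of_cubic_root x_mem_fibre]
        ring
    _ = _ := by rw [residual_discr, four_mul_derivative, neg_sq]

end CommRing

theorem cubic_rescaled_eq_branchForm_div {K : Type*} [Field K] (a b c d X : K) {Z : K}
    (hZ : Z ≠ 0) :
    (12 * (a ^ 3 + b ^ 2) * X / Z) ^ 3
        + 12 * (2 * a ^ 2 * d - b * c) * (12 * (a ^ 3 + b ^ 2) * X / Z) ^ 2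
        + 12 * (16 * a * d ^ 2 + 3 * c ^ 2) * (a ^ 3 + b ^ 2) * (12 * (a ^ 3 + b ^ 2) * X / Z)
        + 512 * (a ^ 3 + b ^ 2) ^ 2 * d ^ 3 =
      (a ^ 3 + b ^ 2) ^ 2 * (16 * branchForm a b c d X Z) / Z ^ 3 := by
  rw [branchForm]
  field_simp
  ring

/-- first map identity of Lemma A.1: on the genus-2 curve
`t·y² = (x³ + 3ax + 2b)(2dx³ + 3cx² + 1)`, the map `(x, y) ↦ (u₁, y·v₁)` lands on the
elliptic curve `t·Y² = X³ + 12(2a²d - bc)X² + 12(16ad² + 3c²)Δ₁·X + 512·Δ₁²·d³`. -/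
theorem stmt13 (k : Type*) [Field k] (h2 : (2 : k) ≠ 0) (h3 : (3 : k) ≠ 0)
    (a b c d t : k) (habcd : 12 * a * c + 16 * b * d = 1)
    (hΔ₁ : a ^ 3 + b ^ 2 ≠ 0) (hΔ₂ : c ^ 3 + d ^ 2 ≠ 0) (ht : t ≠ 0)
    (x y : k)
    (hxy : t * y ^ 2 = (x ^ 3 + 3 * a * x + 2 * b) * (2 * d * x ^ 3 + 3 * c * x ^ 2 + 1))
    (hden : x ^ 3 + 3 * a * x + 2 * b ≠ 0) :
    (let Δ₁ := a ^ 3 + b ^ 2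
     let u₁ := 12 * Δ₁ * (-(2 * d * x) + c) / (x ^ 3 + 3 * a * x + 2 * b)
     let v₁ := Δ₁ * (16 * d * x ^ 3 - 12 * c * x ^ 2 - 1) / (x ^ 3 + 3 * a * x + 2 * b) ^ 2
     t * (y * v₁) ^ 2 =
       u₁ ^ 3 + 12 * (2 * a ^ 2 * d - b * c) * u₁ ^ 2
         + 12 * (16 * a * d ^ 2 + 3 * c ^ 2) * Δ₁ * u₁ + 512 * Δ₁ ^ 2 * d ^ 3) := by
  intro Δ₁ _ v₁
  set P := x ^ 3 + 3 * a * x + 2 * b with hP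
  have branch_factorization : 16 * branchForm a b c d (-(2 * d * x) + c) P =
      (2 * d * x ^ 3 + 3 * c * x ^ 2 + 1) * (16 * d * x ^ 3 - 12 * c * x ^ 2 - 1) ^ 2 := by
    rw [hP, sixteen_mul_branchForm_eq_mul_sq, habcd]
  calc t * (y * v₁) ^ 2
      = t * y ^ 2 * v₁ ^ 2 := by ring
    _ = P * (2 * d * x ^ 3 + 3 * c * x ^ 2 + 1) *
          (Δ₁ * (16 * d * x ^ 3 - 12 * c * x ^ 2 - 1) / P ^ 2) ^ 2 := by rw [hxy]
    _ = Δ₁ ^ 2 * (16 * branchForm a b c d (-(2 * d * x) + c) P) / P ^ 3 := by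
        rw [branch_factorization]
        field_simp
    _ = _ := (cubic_rescaled_eq_branchForm_div a b c d _ hden).symm
end

section
/- Let k be a field of characteristic neither 2 nor 3, and let a, b, c, d, t ∈ k satisfy 12ac + 16bd = 1, Δ₁ := a³ + b² ≠ 0, Δ₂ := c³ + d² ≠ 0, and t ≠ 0. Define f = (x³ + 3ax + 2b)(2dx³ + 3cx² + 1) and f₂ = X³ + 12(2bc² - ad)X² + 12(16b²c + 3a²)Δ₂·X + 512·Δ₂²·b³. Then for all x, y ∈ k with t·y² = f(x) and 2dx³ + 3cx² + 1 ≠ 0, setting u₂ = 12Δ₂·x²(ax - 2b)/(2dx³ + 3cx² + 1) and v₂ = Δ₂·(x³ + 12ax - 16b)/(2dx³ + 3cx² + 1)², one has t·(y·v₂)² = f₂(u₂). -/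
/-!
Write `w = N / D` with `N = x²(ax - 2b)` and `D = 2dx³ + 3cx² + 1`, so that `u₂ = 12Δ₂w`. Then
`f₂(12Δ₂w) = Δ₂² ((12cw + 8b)³ + 27w(4a - 8dw)²)` and
`(x³ + 3ax + 2b)(x³ + 12ax - 16b)² = (x³ + 8b)³ + 27N(x² + 4a)²`.
The relation `12ac + 16bd = 1` is what makes `12cN + 8bD = x³ + 8b` and `4aD - 8dN = x² + 4a`, so
the two expressions agree up to the factor `Δ₂² / D³`.
-/

namespace DegreeThreeMap

section CommRing

variable {R : Type*} [CommRing R]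

/-- The factor `x³ + 3ax + 2b` of the sextic `f` defining the genus-2 curve; the other factor of `f`
is `den`. -/
def cubicFactor (a b x : R) : R :=
  x ^ 3 + 3 * a * x + 2 * b

/-- The common denominator of the map: `u₂` has denominator `den`, and `v₂` has denominator
`den²`. -/
def den (c d x : R) : R :=
  2 * d * x ^ 3 + 3 * c * x ^ 2 + 1

/-- The numerator of `u₂`, without its constant factor `12Δ₂`. -/
def uNum (a b x : R) : R :=
  x ^ 2 * (a * x - 2 * b)

/-- The numerator of `v₂`, without its constant factor `Δ₂`. -/
def vNum (a b x : R) : R :=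
  x ^ 3 + 12 * a * x - 16 * b

/-- The cubic `f₂` defining the target elliptic curve, with `Δ₂ = c³ + d²`. -/
def targetCubic (a b c d X : R) : R :=
  X ^ 3 + 12 * (2 * b * c ^ 2 - a * d) * X ^ 2
    + 12 * (16 * b ^ 2 * c + 3 * a ^ 2) * (c ^ 3 + d ^ 2) * X + 512 * (c ^ 3 + d ^ 2) ^ 2 * b ^ 3

theorem targetCubic_twelve_mul (a b c d w : R) :
    targetCubic a b c d (12 * (c ^ 3 + d ^ 2) * w) =
      (c ^ 3 + d ^ 2) ^ 2 *
        ((12 * c * w + 8 * b) ^ 3 + 27 * w * (4 * a - 8 * d * w) ^ 2) := by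
  unfold targetCubic
  ring

theorem cubicFactor_mul_vNum_sq (a b x : R) :
    cubicFactor a b x * vNum a b x ^ 2 =
      (x ^ 3 + 8 * b) ^ 3 + 27 * uNum a b x * (x ^ 2 + 4 * a) ^ 2 := by
  -- With `L = ax - 2b` and `A = x³ + 8b` this is `(A + 3L)(A + 12L)² = A³ + 27L(A + 4L)²`,
  -- where `A + 4L = x(x² + 4a)`.
  unfold cubicFactor vNum uNum
  ring

theorem twelve_mul_uNum_add_eight_mul_den {a b c d : R} (h : 12 * a * c + 16 * b * d = 1) (x : R) :
    12 * c * uNum a b x + 8 * b * den c d x = x ^ 3 + 8 * b := by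
  unfold uNum den
  linear_combination x ^ 3 * h

theorem four_mul_den_sub_eight_mul_uNum {a b c d : R} (h : 12 * a * c + 16 * b * d = 1) (x : R) :
    4 * a * den c d x - 8 * d * uNum a b x = x ^ 2 + 4 * a := by
  unfold uNum den
  linear_combination x ^ 2 * h

end CommRing

theorem targetCubic_uNum_div_den {k : Type*} [Field k] {a b c d x : k}
    (h : 12 * a * c + 16 * b * d = 1) (hden : den c d x ≠ 0) :
    targetCubic a b c d (12 * (c ^ 3 + d ^ 2) * uNum a b x / den c d x) =
      (c ^ 3 + d ^ 2) ^ 2 * (cubicFactor a b x * vNum a b x ^ 2) / den c d x ^ 3 := by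
  have hcube : 12 * c * (uNum a b x / den c d x) + 8 * b = (x ^ 3 + 8 * b) / den c d x := by
    rw [← twelve_mul_uNum_add_eight_mul_den h]
    field_simp
  have hsq : 4 * a - 8 * d * (uNum a b x / den c d x) = (x ^ 2 + 4 * a) / den c d x := by
    rw [← four_mul_den_sub_eight_mul_uNum h]
    field_simp
  rw [mul_div_assoc, targetCubic_twelve_mul, hcube, hsq, cubicFactor_mul_vNum_sq]
  field_simp

end DegreeThreeMap

open DegreeThreeMap

/-- second map identity of Lemma A.1: on the genus-2 curve
`t·y² = (x³ + 3ax + 2b)(2dx³ + 3cx² + 1)`, the map `(x, y) ↦ (u₂, y·v₂)` lands on the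
elliptic curve `t·Y² = X³ + 12(2bc² - ad)X² + 12(16b²c + 3a²)Δ₂·X + 512·Δ₂²·b³`. -/
theorem stmt14 (k : Type*) [Field k] (h2 : (2 : k) ≠ 0) (h3 : (3 : k) ≠ 0)
    (a b c d t : k) (habcd : 12 * a * c + 16 * b * d = 1)
    (hΔ₁ : a ^ 3 + b ^ 2 ≠ 0) (hΔ₂ : c ^ 3 + d ^ 2 ≠ 0) (ht : t ≠ 0)
    (x y : k)
    (hxy : t * y ^ 2 = (x ^ 3 + 3 * a * x + 2 * b) * (2 * d * x ^ 3 + 3 * c * x ^ 2 + 1))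
    (hden : 2 * d * x ^ 3 + 3 * c * x ^ 2 + 1 ≠ 0) :
    (let Δ₂ := c ^ 3 + d ^ 2
     let u₂ := 12 * Δ₂ * (x ^ 2 * (a * x - 2 * b)) / (2 * d * x ^ 3 + 3 * c * x ^ 2 + 1)
     let v₂ := Δ₂ * (x ^ 3 + 12 * a * x - 16 * b) / (2 * d * x ^ 3 + 3 * c * x ^ 2 + 1) ^ 2
     t * (y * v₂) ^ 2 =
       u₂ ^ 3 + 12 * (2 * b * c ^ 2 - a * d) * u₂ ^ 2
         + 12 * (16 * b ^ 2 * c + 3 * a ^ 2) * Δ₂ * u₂ + 512 * Δ₂ ^ 2 * b ^ 3) := by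
  intro Δ₂ u₂ v₂
  change den c d x ≠ 0 at hden
  change t * y ^ 2 = cubicFactor a b x * den c d x at hxy
  calc t * (y * v₂) ^ 2
      = t * y ^ 2 * (Δ₂ * vNum a b x / den c d x ^ 2) ^ 2 := by rw [mul_pow, ← mul_assoc]; rfl
    _ = Δ₂ ^ 2 * (cubicFactor a b x * vNum a b x ^ 2) / den c d x ^ 3 := by
      rw [hxy]
      field_simp
    _ = targetCubic a b c d u₂ := (targetCubic_uNum_div_den habcd hden).symm
end
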